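/- Let u be subharmonic in ℂ of finite order ρ(u), let D be a component of {z : u(z) > 0} with angular measure function θ*(r), and for ε > 0 let F = {r ≥ 1 : θ*(r) ≤ επ}. Then limsup_{R→∞} (1/log R) ∫_{F ∩ [1,R]} dt/t ≤ ε·ρ(u). -/

import Mathlib

open scoped Classical

open MeasureTheory Real Filter ENNReal

/-- `u` is subharmonic on `ℂ`: upper semicontinuous and satisfying the sub-mean value
inequality on all circles. -/
def IsSubharmonic (u : ℂ → ℝ) : Prop :=
  UpperSemicontinuous u ∧
  ∀ z : ℂ, ∀ r : ℝ, 0 < r →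
    u z ≤ (1 / (2 * π)) * ∫ θ in (0:ℝ)..(2 * π), u (z + r * Complex.exp (θ * Complex.I))

/-- The angular measure `θ*_D(r)` of `{θ ∈ [0,2π) : r e^{iθ} ∈ D}`, equal to `∞`
if the entire circle `|z| = r` lies in `D`. -/
noncomputable def thetaStar (D : Set ℂ) (r : ℝ) : ℝ≥0∞ :=
  if ∀ θ : ℝ, (r * Complex.exp (θ * Complex.I) : ℂ) ∈ D then ⊤
  else volume {θ ∈ Set.Ico (0:ℝ) (2 * π) | (r * Complex.exp (θ * Complex.I) : ℂ) ∈ D}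

/-- The order of growth of a subharmonic function `u`,
`ρ(u) = limsup_{r→∞} log M(r,u)/log r` where `M(r,u) = max_{|z|=r} u(z)`. -/
noncomputable def subharmonicOrder (u : ℂ → ℝ) : ℝ≥0∞ :=
  Filter.limsup (fun r : ℝ =>
    ENNReal.ofReal (Real.log (sSup (u '' Metric.sphere (0:ℂ) r)) / Real.log r)) Filter.atTop

/-!
The proof is Carleman's method. Suppose first that `u` is of class `C²`, put `W = u` on `D` and
`W = 0` elsewhere, and let `φ t` be the mean of `W²` over the circle `|z| = exp t`. Differentiating
under the integral and discarding `Δ W ≥ 0` gives `(√φ)'' ≥ 0`, and `(√φ)'' ≥ k² √φ` at every `t`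
for which `D` meets the circle in an angle less than `π / k`, because on such a circle Wirtinger's
inequality bounds `k² ∫ W²` by `∫ (∂W/∂θ)²`. Hence `log ((√φ)' + k √φ)` is increasing, with slope at
least `k` at these `t`; so `k` times their logarithmic measure up to radius `R` is at most
`log M(eR, u) + O(1)`. For `k = 1 / ε` and `u` of order less than `a` this is at most
`a log R + O(1)`.

A general `u` is replaced by the convolutions of `u⁺` with radial bumps, and `D` by components of
superlevel sets of these. The closures of the tails of the sequence of components decrease to a
connected set on which `u > 0`, which is therefore contained in `D`. The estimates pass to the limit
because for a decreasing sequence of closed sets with intersection in `D`, an angular measure `θ*`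
of `D` below a bound is eventually below that bound along the sequence.
-/

section

open Set Topology Metric
open InnerProductSpace (laplacian_eq_iteratedFDeriv_complexPlane laplacian_congr_nhds)
open scoped Laplacian ContDiff Convolution

/-! ### Wirtinger's inequality -/

lemma hasDerivAt_mul_of_eq_zero {q f : ℝ → ℝ} {f' x : ℝ} (hq : ContinuousAt q x) (hqx : q x = 0)
    (hf : HasDerivAt f f' x) (hfx : f x = 0) : HasDerivAt (fun y => q y * f y) 0 x := by
  rw [hasDerivAt_iff_isLittleO]
  have hqo : q =o[𝓝 x] (fun _ => (1 : ℝ)) := by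
    simpa only [Asymptotics.isLittleO_one_iff, hqx] using hq.tendsto
  have hfO : f =O[𝓝 x] fun y => y - x := by simpa [hfx] using hf.isBigO_sub
  simpa [hfx, hqx] using hqo.mul_isBigO hfO

/- The derivative of `p f²` is `f'² - k² f² - (f' - p f)²` where `f ≠ 0`, and `0` where `f = 0`,
even if `p` is not differentiable there. -/
lemma sq_mul_integral_sq_le_of_riccati {f f' p : ℝ → ℝ} {a b k : ℝ} (hab : a ≤ b)
    (hf : ∀ x, HasDerivAt f (f' x) x) (hf' : Continuous f') (hp : ContinuousOn p (Icc a b))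
    (hp' : ∀ x ∈ Ioo a b, f x ≠ 0 → HasDerivAt p (-(k ^ 2 + p x ^ 2)) x)
    (ha : f a = 0) (hb : f b = 0) :
    k ^ 2 * ∫ x in a..b, f x ^ 2 ≤ ∫ x in a..b, f' x ^ 2 := by
  have hfc : Continuous f := continuous_iff_continuousAt.2 fun x => (hf x).continuousAt
  have hderiv : ∀ x ∈ Ioo a b, HasDerivAt (fun y => (p y * f y) * f y)
      (2 * p x * f x * f' x - (if f x = 0 then 0 else k ^ 2 + p x ^ 2) * f x ^ 2) x := by
    intro x hx
    by_cases hfx : f x = 0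
    · have hpx : ContinuousAt p x := hp.continuousAt (Icc_mem_nhds hx.1 hx.2)
      simpa [hfx] using
        hasDerivAt_mul_of_eq_zero (hpx.mul hfc.continuousAt) (by simp [hfx]) (hf x) hfx
    · refine (((hp' x hx hfx).mul (hf x)).mul (hf x)).congr_deriv ?_
      simp only [hfx, if_false, Pi.mul_apply]
      ring
  have hbound := intervalIntegral.sub_le_integral_of_hasDeriv_right_of_le
    (φ := fun x => f' x ^ 2 - k ^ 2 * f x ^ 2) hab
    ((hp.mul hfc.continuousOn).mul hfc.continuousOn)
    (fun x hx => (hderiv x hx).hasDerivWithinAt)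
    (Continuous.integrableOn_Icc (by fun_prop)) (fun x _ => by
      split_ifs with hfx
      · simp only [hfx]; nlinarith [sq_nonneg (f' x)]
      · nlinarith [sq_nonneg (f' x - p x * f x)])
  rw [intervalIntegral.integral_sub (Continuous.intervalIntegrable (by fun_prop) _ _)
    (Continuous.intervalIntegrable (by fun_prop) _ _),
    intervalIntegral.integral_const_mul] at hbound
  simp only [Pi.mul_apply, ha, hb, mul_zero, sub_self] at hbound
  linarith

lemma hasDerivAt_mul_cot {α : ℝ → ℝ} {k x : ℝ} (hα : HasDerivAt α k x) (hx : sin (α x) ≠ 0) :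
    HasDerivAt (fun y => k * (cos (α y) / sin (α y)))
      (-(k ^ 2 + (k * (cos (α x) / sin (α x))) ^ 2)) x := by
  refine ((hα.cos.div hα.sin hx).const_mul k).congr_deriv ?_
  field_simp
  ring

lemma integral_indicator_one_eq_measureReal {E : Set ℝ} (hE : MeasurableSet E) {a b : ℝ}
    (hab : a ≤ b) : ∫ x in a..b, indicator E (1 : ℝ → ℝ) x = volume.real (E ∩ Ioc a b) := by
  rw [intervalIntegral.integral_of_le hab, integral_indicator_one hE, measureReal_restrict_apply hE]

lemma measureReal_inter_Ioc_eq_of_periodic {E : Set ℝ} (hE : MeasurableSet E) {T : ℝ} (hT : 0 ≤ T)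
    (hper : ∀ x, x + T ∈ E ↔ x ∈ E) (a b : ℝ) :
    volume.real (E ∩ Ioc a (a + T)) = volume.real (E ∩ Ioc b (b + T)) := by
  have hper' : Function.Periodic (indicator E (1 : ℝ → ℝ)) T := fun x => by
    simp [indicator, hper]
  simpa [integral_indicator_one_eq_measureReal hE, hT] using hper'.intervalIntegral_add_eq a b

/- The solution is `k cot (k τ + η)`, where `τ x` is the measure of `E ∩ [a, x]`. -/
lemma exists_hasDerivAt_riccati {E : Set ℝ} (hE : IsOpen E) {a b k : ℝ} (hk : 0 ≤ k)
    (hm : k * volume.real (E ∩ Ioc a b) < π) :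
    ∃ p : ℝ → ℝ, ContinuousOn p (Icc a b) ∧
      ∀ x ∈ E ∩ Ioo a b, HasDerivAt p (-(k ^ 2 + p x ^ 2)) x := by
  have hint : ∀ c d : ℝ, IntervalIntegrable (indicator E 1) volume c d := fun c d =>
    intervalIntegrable_iff.2 ((intervalIntegrable_iff.1
      (intervalIntegrable_const (c := (1 : ℝ)))).indicator hE.measurableSet)
  set τ : ℝ → ℝ := fun x => ∫ y in a..x, indicator E 1 y
  have hτ_eq : ∀ x, a ≤ x → τ x = volume.real (E ∩ Ioc a x) := fun x hx =>
    integral_indicator_one_eq_measureReal hE.measurableSet hx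
  have hτ_cont : Continuous τ := intervalIntegral.continuous_primitive hint a
  have hτ_deriv : ∀ x ∈ E, HasDerivAt τ 1 x := fun x hx => by
    have hone : indicator E 1 =ᶠ[𝓝 x] fun _ => (1 : ℝ) := by
      filter_upwards [hE.mem_nhds hx] with y hy using indicator_of_mem hy 1
    simpa [hone.eq_of_nhds] using intervalIntegral.integral_hasDerivAt_right (hint a x)
      (measurable_one.indicator hE.measurableSet).stronglyMeasurable.stronglyMeasurableAtFilter
      (continuousAt_const.congr hone.symm)
  set η := (π - k * volume.real (E ∩ Ioc a b)) / 2 with hη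
  set α : ℝ → ℝ := fun x => k * τ x + η
  have hsin : ∀ x ∈ Icc a b, 0 < sin (α x) := fun x hx => by
    have hτ0 : 0 ≤ τ x := by rw [hτ_eq x hx.1]; positivity
    have hτb : τ x ≤ volume.real (E ∩ Ioc a b) := by
      rw [hτ_eq x hx.1]
      exact measureReal_mono (by gcongr; exact hx.2)
        (measure_inter_lt_top_of_right_ne_top (by simp)).ne
    apply sin_pos_of_pos_of_lt_pi <;> simp only [α] <;>
      linarith [mul_nonneg hk hτ0, mul_le_mul_of_nonneg_left hτb hk]
  refine ⟨fun x => k * (cos (α x) / sin (α x)), ?_, fun x hx => ?_⟩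
  · exact continuousOn_const.mul (ContinuousOn.div (by fun_prop) (by fun_prop)
      fun x hx => (hsin x hx).ne')
  · exact hasDerivAt_mul_cot ((((hτ_deriv x hx.1).const_mul k).add_const η).congr_deriv (mul_one k))
      (hsin x (Ioo_subset_Icc_self hx.2)).ne'

lemma sq_mul_integral_sq_le_of_measureReal_support_lt {f f' : ℝ → ℝ}
    (hf : ∀ x, HasDerivAt f (f' x) x) (hf' : Continuous f')
    {a b k : ℝ} (hab : a ≤ b) (hk : 0 ≤ k) (ha : f a = 0) (hb : f b = 0)
    (hm : k * volume.real ({x | f x ≠ 0} ∩ Ioc a b) < π) :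
    k ^ 2 * ∫ x in a..b, f x ^ 2 ≤ ∫ x in a..b, f' x ^ 2 := by
  have hfc : Continuous f := continuous_iff_continuousAt.2 fun x => (hf x).continuousAt
  obtain ⟨p, hp, hp'⟩ :=
    exists_hasDerivAt_riccati (isOpen_ne_fun hfc continuous_const) hk hm
  exact sq_mul_integral_sq_le_of_riccati hab hf hf' hp (fun x hx hfx => hp' x ⟨hfx, hx⟩) ha hb

lemma periodic_of_hasDerivAt {f f' : ℝ → ℝ} (hf : ∀ x, HasDerivAt f (f' x) x) {T : ℝ}
    (hper : Function.Periodic f T) : Function.Periodic f' T := fun x => by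
  have hshift : HasDerivAt (fun y => f (y + T)) (f' (x + T)) x := (hf (x + T)).comp_add_const x T
  simp only [hper _] at hshift
  exact hshift.unique (hf x)

lemma sq_mul_integral_sq_le_of_periodic {f f' : ℝ → ℝ} (hf : ∀ x, HasDerivAt f (f' x) x)
    (hf' : Continuous f') {T : ℝ} (hT : 0 ≤ T) (hper : Function.Periodic f T) {x₀ k : ℝ}
    (hk : 0 ≤ k) (hx₀ : f x₀ = 0)
    (hm : k * volume.real ({x | f x ≠ 0} ∩ Ioc 0 T) < π) :
    k ^ 2 * ∫ x in 0..T, f x ^ 2 ≤ ∫ x in 0..T, f' x ^ 2 := by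
  have hfc : Continuous f := continuous_iff_continuousAt.2 fun x => (hf x).continuousAt
  have hshift : ∀ g : ℝ → ℝ, Function.Periodic g T →
      ∫ x in 0..T, g x = ∫ x in x₀..x₀ + T, g x :=
    fun g hg => by simpa using hg.intervalIntegral_add_eq 0 x₀
  have hmeas : k * volume.real ({x | f x ≠ 0} ∩ Ioc x₀ (x₀ + T)) < π := by
    rw [measureReal_inter_Ioc_eq_of_periodic
      (isOpen_ne_fun hfc continuous_const).measurableSet hT (by simp [hper _]) x₀ 0]
    simpa using hm
  rw [hshift _ fun x => by rw [hper x], hshift _ fun x => by rw [periodic_of_hasDerivAt hf hper x]]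
  exact sq_mul_integral_sq_le_of_measureReal_support_lt hf hf' (by linarith) hk hx₀
    (by rw [hper, hx₀]) hmeas

/-! ### Growth from differential inequalities -/

lemma intervalIntegral_mul_sq_le {f g : ℝ → ℝ} (hf : Continuous f) (hg : Continuous g) {a b : ℝ}
    (hab : a ≤ b) :
    (∫ x in a..b, f x * g x) ^ 2 ≤ (∫ x in a..b, f x ^ 2) * ∫ x in a..b, g x ^ 2 := by
  have hquad : ∀ s : ℝ, 0 ≤ (∫ x in a..b, f x ^ 2) * (s * s) +
      (2 * ∫ x in a..b, f x * g x) * s + ∫ x in a..b, g x ^ 2 := fun s => by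
    have hint : ∀ h : ℝ → ℝ, Continuous h → IntervalIntegrable h volume a b :=
      fun h hh => hh.intervalIntegrable a b
    calc 0 ≤ ∫ x in a..b, (s * f x + g x) ^ 2 :=
          intervalIntegral.integral_nonneg hab fun x _ => sq_nonneg _
      _ = ∫ x in a..b, (s * s * f x ^ 2 + 2 * s * (f x * g x) + g x ^ 2) := by
          congr 1 with x; ring
      _ = _ := by
          rw [intervalIntegral.integral_add (hint _ (by fun_prop)) (hint _ (by fun_prop)),
            intervalIntegral.integral_add (hint _ (by fun_prop)) (hint _ (by fun_prop)),
            intervalIntegral.integral_const_mul, intervalIntegral.integral_const_mul]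
          ring
  have hdiscrim := discrim_le_zero hquad
  rw [discrim] at hdiscrim
  linarith

lemma deriv_nonneg_of_bddAbove_atBot {φ φ' φ'' : ℝ → ℝ} {b M : ℝ}
    (hφ : ∀ t < b, HasDerivAt φ (φ' t) t) (hφ' : ∀ t < b, HasDerivAt φ' (φ'' t) t)
    (hφ'' : ∀ t < b, 0 ≤ φ'' t) (hM : ∀ᶠ t in atBot, φ t ≤ M) {t : ℝ} (ht : t < b) :
    0 ≤ φ' t := by
  by_contra! hneg
  have hmono : MonotoneOn φ' (Iio b) := by
    refine monotoneOn_of_hasDerivWithinAt_nonneg (convex_Iio b)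
      (fun s hs => (hφ' s hs).continuousAt.continuousWithinAt) ?_
      (f' := φ'') ?_ <;> simp only [interior_Iio]
    · exact fun s hs => (hφ' s hs).hasDerivWithinAt
    · exact hφ''
  have hle : ∀ s ≤ t, φ t - φ s ≤ φ' t * (t - s) := fun s hst => by
    refine Convex.image_sub_le_mul_sub_of_deriv_le (convex_Iic t)
      (fun x hx => (hφ x (hx.trans_lt ht)).continuousAt.continuousWithinAt) ?_ ?_ s hst t
      self_mem_Iic hst <;> simp only [interior_Iic]
    · exact fun x hx => (hφ x (hx.trans ht)).differentiableAt.differentiableWithinAt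
    · intro x hx
      rw [(hφ x (hx.trans ht)).deriv]
      exact hmono (hx.trans ht) ht hx.le
  have hlim : Tendsto (fun s => φ' t * (t - s)) atBot atBot :=
    (tendsto_const_mul_atBot_of_neg hneg).2
      (tendsto_atTop_add_const_left _ t tendsto_neg_atBot_atTop)
  obtain ⟨s, hsM, hst, hs⟩ :=
    (hM.and ((eventually_le_atBot t).and (hlim.eventually_lt_atBot (φ t - M)))).exists
  linarith [hle s hst]

section Growth

variable {k t₁ t₂ : ℝ} {E : Set ℝ}

/- Integrate `(log (g' + k g))' = (g'' + k g') / (g' + k g) ≥ k 1_E` over `[t₁, t₂]`. -/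
lemma mul_measureReal_le_log_sub_log {g g' g'' : ℝ → ℝ} (hk : 0 < k) (ht : t₁ ≤ t₂)
    (hE : MeasurableSet E) (hg : ∀ t ∈ Icc t₁ t₂, HasDerivAt g (g' t) t)
    (hg' : ∀ t ∈ Icc t₁ t₂, HasDerivAt g' (g'' t) t) (hpos : ∀ t ∈ Icc t₁ t₂, 0 < g t)
    (hnn : ∀ t ∈ Icc t₁ t₂, 0 ≤ g' t) (hconv : ∀ t ∈ Icc t₁ t₂, 0 ≤ g'' t)
    (hgE : ∀ t ∈ E ∩ Icc t₁ t₂, k ^ 2 * g t ≤ g'' t) :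
    k * volume.real (E ∩ Icc t₁ t₂) ≤
      Real.log (g' t₂ + k * g t₂) - Real.log (g' t₁ + k * g t₁) := by
  have hden : ∀ t ∈ Icc t₁ t₂, 0 < g' t + k * g t := fun t h =>
    add_pos_of_nonneg_of_pos (hnn t h) (mul_pos hk (hpos t h))
  have hderiv : ∀ t ∈ Icc t₁ t₂, HasDerivAt (fun t => Real.log (g' t + k * g t))
      ((g'' t + k * g' t) / (g' t + k * g t)) t := fun t h =>
    ((hg' t h).add ((hg t h).const_mul k)).log (hden t h).ne'
  have hbound : ∀ t ∈ Icc t₁ t₂,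
      indicator E (fun _ => k) t ≤ (g'' t + k * g' t) / (g' t + k * g t) := fun t h => by
    rw [le_div_iff₀ (hden t h)]
    by_cases htE : t ∈ E
    · rw [indicator_of_mem htE]
      linarith [hgE t ⟨htE, h⟩]
    · rw [indicator_of_notMem htE, zero_mul]
      exact add_nonneg (hconv t h) (mul_nonneg hk.le (hnn t h))
  calc k * volume.real (E ∩ Icc t₁ t₂) = ∫ t in t₁..t₂, indicator E (fun _ => k) t := by
        rw [intervalIntegral.integral_of_le ht, ← integral_Icc_eq_integral_Ioc,
          setIntegral_indicator hE, setIntegral_const, smul_eq_mul, inter_comm, mul_comm]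
    _ ≤ _ := intervalIntegral.integral_le_sub_of_hasDeriv_right_of_le ht
        (fun t h => (hderiv t h).continuousAt.continuousWithinAt)
        (fun t h => (hderiv t (Ioo_subset_Icc_self h)).hasDerivWithinAt)
        ((integrableOn_const (by simp)).indicator hE)
        (fun t h => hbound t (Ioo_subset_Icc_self h))

lemma mul_measureReal_le_log_add_one_sub_log {g g' g'' : ℝ → ℝ} (hk : 0 < k) (ht : t₁ ≤ t₂)
    (hE : MeasurableSet E) (hg : ∀ t ∈ Icc t₁ (t₂ + 1), HasDerivAt g (g' t) t)
    (hg' : ∀ t ∈ Icc t₁ (t₂ + 1), HasDerivAt g' (g'' t) t)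
    (hpos : ∀ t ∈ Icc t₁ (t₂ + 1), 0 < g t) (hnn : ∀ t ∈ Icc t₁ (t₂ + 1), 0 ≤ g' t)
    (hconv : ∀ t ∈ Icc t₁ (t₂ + 1), 0 ≤ g'' t)
    (hgE : ∀ t ∈ E ∩ Icc t₁ t₂, k ^ 2 * g t ≤ g'' t) :
    k * volume.real (E ∩ Icc t₁ t₂) ≤ Real.log ((1 + k) * g (t₂ + 1)) - Real.log (k * g t₁) := by
  have hsub : Icc t₁ t₂ ⊆ Icc t₁ (t₂ + 1) := Icc_subset_Icc_right (by linarith)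
  have hright : Icc t₂ (t₂ + 1) ⊆ Icc t₁ (t₂ + 1) := Icc_subset_Icc_left ht
  have h₁ : t₁ ∈ Icc t₁ (t₂ + 1) := ⟨le_rfl, by linarith⟩
  have h₂ : t₂ ∈ Icc t₁ (t₂ + 1) := ⟨ht, by linarith⟩
  have hmono : MonotoneOn g' (Icc t₁ (t₂ + 1)) :=
    monotoneOn_of_hasDerivWithinAt_nonneg (convex_Icc _ _)
      (fun t h => (hg' t h).continuousAt.continuousWithinAt)
      (fun t h => (hg' t (interior_subset h)).hasDerivWithinAt)
      (fun t h => hconv t (interior_subset h))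
  have hstep : g' t₂ ≤ g (t₂ + 1) - g t₂ := by
    obtain ⟨c, hc, hslope⟩ := exists_hasDerivAt_eq_slope g g' (lt_add_one t₂)
      (fun t h => (hg t (hright h)).continuousAt.continuousWithinAt)
      (fun t h => hg t (hright (Ioo_subset_Icc_self h)))
    rw [add_sub_cancel_left, div_one] at hslope
    exact hslope ▸ hmono h₂ (hright (Ioo_subset_Icc_self hc)) hc.1.le
  have hle := mul_measureReal_le_log_sub_log hk ht hE (fun t h => hg t (hsub h))
    (fun t h => hg' t (hsub h)) (fun t h => hpos t (hsub h)) (fun t h => hnn t (hsub h))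
    (fun t h => hconv t (hsub h)) hgE
  have hupper : Real.log (g' t₂ + k * g t₂) ≤ Real.log ((1 + k) * g (t₂ + 1)) :=
    log_le_log (add_pos_of_nonneg_of_pos (hnn _ h₂) (mul_pos hk (hpos _ h₂)))
      (by nlinarith [hnn _ h₂, hpos _ h₂])
  have hlower : Real.log (k * g t₁) ≤ Real.log (g' t₁ + k * g t₁) :=
    log_le_log (mul_pos hk (hpos _ h₁)) (by linarith [hnn _ h₁])
  linarith

lemma hasDerivAt_div_two_sqrt {φ φ' : ℝ → ℝ} {φ'' t : ℝ} (hφ : HasDerivAt φ (φ' t) t)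
    (hφ' : HasDerivAt φ' φ'' t) (hpos : 0 < φ t) :
    HasDerivAt (fun t => φ' t / (2 * √(φ t)))
      ((2 * φ t * φ'' - φ' t ^ 2) / (4 * φ t * √(φ t))) t := by
  have hsqrt : √(φ t) ≠ 0 := (sqrt_pos.2 hpos).ne'
  refine (hφ'.div ((hφ.sqrt hpos.ne').const_mul 2) (by positivity)).congr_deriv ?_
  have hsq : φ t = √(φ t) ^ 2 := (sq_sqrt hpos.le).symm
  field_simp
  rw [← hsq]
  ring

/- The hypotheses say that `g = √φ` satisfies `g'' ≥ 0`, and `g'' ≥ k² g` on `E`. -/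
lemma mul_measureReal_le_log_sqrt {φ φ' φ'' : ℝ → ℝ} (hk : 0 < k) (ht : t₁ ≤ t₂)
    (hE : MeasurableSet E) (hφ : ∀ t ∈ Icc t₁ (t₂ + 1), HasDerivAt φ (φ' t) t)
    (hφ' : ∀ t ∈ Icc t₁ (t₂ + 1), HasDerivAt φ' (φ'' t) t)
    (hpos : ∀ t ∈ Icc t₁ (t₂ + 1), 0 < φ t) (hnn : ∀ t ∈ Icc t₁ (t₂ + 1), 0 ≤ φ' t)
    (hconv : ∀ t ∈ Icc t₁ (t₂ + 1), φ' t ^ 2 ≤ 2 * φ t * φ'' t)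
    (hφE : ∀ t ∈ E ∩ Icc t₁ t₂, φ' t ^ 2 + (2 * k * φ t) ^ 2 ≤ 2 * φ t * φ'' t) :
    k * volume.real (E ∩ Icc t₁ t₂) ≤
      Real.log ((1 + k) * √(φ (t₂ + 1))) - Real.log (k * √(φ t₁)) := by
  have hsub : Icc t₁ t₂ ⊆ Icc t₁ (t₂ + 1) := Icc_subset_Icc_right (by linarith)
  refine mul_measureReal_le_log_add_one_sub_log (g := fun t => √(φ t)) hk ht hE
    (fun t h => (hφ t h).sqrt (hpos t h).ne')
    (fun t h => hasDerivAt_div_two_sqrt (hφ t h) (hφ' t h) (hpos t h))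
    (fun t h => sqrt_pos.2 (hpos t h)) (fun t h => div_nonneg (hnn t h) (by positivity))
    (fun t h => ?_) (fun t h => ?_)
  · have := hpos t h
    exact div_nonneg (sub_nonneg.2 (hconv t h)) (by positivity)
  · have := hpos t (hsub h.2)
    rw [le_div_iff₀ (by positivity)]
    calc k ^ 2 * √(φ t) * (4 * φ t * √(φ t)) = 4 * k ^ 2 * φ t * √(φ t) ^ 2 := by ring
      _ = (2 * k * φ t) ^ 2 := by rw [sq_sqrt this.le]; ring
      _ ≤ 2 * φ t * φ'' t - φ' t ^ 2 := by linarith [hφE t h]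

end Growth

/-! ### The Laplacian and smooth subharmonic functions -/

lemma fderiv_fderiv_comp {E F G : Type*} [NormedAddCommGroup E] [NormedSpace ℝ E]
    [NormedAddCommGroup F] [NormedSpace ℝ F] [NormedAddCommGroup G] [NormedSpace ℝ G]
    {f : F → G} {h : E → F} {z : E} (hf : ContDiffAt ℝ 2 f (h z)) (hh : ContDiffAt ℝ 2 h z)
    (v w : E) :
    fderiv ℝ (fderiv ℝ (f ∘ h)) z v w =
      fderiv ℝ (fderiv ℝ f) (h z) (fderiv ℝ h z v) (fderiv ℝ h z w) +
        fderiv ℝ f (h z) (fderiv ℝ (fderiv ℝ h) z v w) := by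
  have hchain : fderiv ℝ (f ∘ h) =ᶠ[𝓝 z] fun y => (fderiv ℝ f (h y)).comp (fderiv ℝ h y) := by
    filter_upwards [hh.eventually (by simp), hh.continuousAt.eventually (hf.eventually (by simp))]
      with y hy hfy
    exact fderiv_comp y (hfy.differentiableAt (by simp)) (hy.differentiableAt (by simp))
  have hf' : DifferentiableAt ℝ (fderiv ℝ f) (h z) :=
    (hf.fderiv_right (m := 1) (by norm_num)).differentiableAt (by simp)
  have hh' : DifferentiableAt ℝ (fderiv ℝ h) z :=
    (hh.fderiv_right (m := 1) (by norm_num)).differentiableAt (by simp)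
  have hcomp : HasFDerivAt (fun y => fderiv ℝ f (h y))
      ((fderiv ℝ (fderiv ℝ f) (h z)).comp (fderiv ℝ h z)) z :=
    hf'.hasFDerivAt.comp z (hh.differentiableAt (by simp)).hasFDerivAt
  rw [hchain.fderiv_eq, (hcomp.clm_comp hh'.hasFDerivAt).fderiv]
  simp [add_comm]

lemma laplacian_eq_fderiv_fderiv (f : ℂ → ℝ) (z : ℂ) :
    Δ f z = fderiv ℝ (fderiv ℝ f) z 1 1 +
      fderiv ℝ (fderiv ℝ f) z Complex.I Complex.I := by
  simp [laplacian_eq_iteratedFDeriv_complexPlane, iteratedFDeriv_two_apply]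

lemma continuousAt_laplacian {f : ℂ → ℝ} {z : ℂ} (hf : ContDiffAt ℝ 2 f z) :
    ContinuousAt (Δ f) z := by
  have h : ContinuousAt (fderiv ℝ (fderiv ℝ f)) z :=
    ((hf.fderiv_right (m := 1) (by norm_num)).fderiv_right (m := 0) (by norm_num)).continuousAt
  simp only [funext (laplacian_eq_fderiv_fderiv f)]
  fun_prop

lemma laplacian_comp_real {Ψ : ℝ → ℝ} {f : ℂ → ℝ} {z : ℂ} (hΨ : ContDiffAt ℝ 2 Ψ (f z))
    (hf : ContDiffAt ℝ 2 f z) :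
    Δ (Ψ ∘ f) z = deriv (deriv Ψ) (f z) * (fderiv ℝ f z 1 ^ 2 + fderiv ℝ f z Complex.I ^ 2) +
      deriv Ψ (f z) * Δ f z := by
  have hΨ'' : ∀ a b : ℝ, fderiv ℝ (fderiv ℝ Ψ) (f z) a b = deriv (deriv Ψ) (f z) * (a * b) := by
    intro a b
    have hdiff : DifferentiableAt ℝ (fderiv ℝ Ψ) (f z) :=
      (hΨ.fderiv_right (m := 1) (by norm_num)).differentiableAt (by simp)
    have hderiv : deriv (deriv Ψ) (f z) = fderiv ℝ (fderiv ℝ Ψ) (f z) 1 1 := by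
      simpa using (hdiff.hasFDerivAt.clm_apply (hasFDerivAt_const (1 : ℝ) (f z))).hasDerivAt.deriv
    have hsmul : fderiv ℝ (fderiv ℝ Ψ) (f z) a b =
        fderiv ℝ (fderiv ℝ Ψ) (f z) (a • 1) (b • 1) := by simp
    rw [hsmul, map_smul, map_smul, smul_apply, smul_eq_mul, smul_eq_mul, hderiv]
    ring
  have hΨ' : ∀ a : ℝ, fderiv ℝ Ψ (f z) a = deriv Ψ (f z) * a := fun a => by
    simp [mul_comm]
  simp only [laplacian_eq_fderiv_fderiv, fderiv_fderiv_comp hΨ hf, hΨ'', hΨ']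
  ring

lemma laplacian_sq {f : ℂ → ℝ} {z : ℂ} (hf : ContDiffAt ℝ 2 f z) :
    Δ (fun w => f w ^ 2) z =
      2 * (fderiv ℝ f z 1 ^ 2 + fderiv ℝ f z Complex.I ^ 2) + 2 * f z * Δ f z := by
  have h := laplacian_comp_real (Ψ := fun x => x ^ 2) (by fun_prop) hf
  have hderiv : deriv (fun x : ℝ => x ^ 2) = fun x => 2 * x := by ext x; simp
  have hderiv2 : deriv (fun x : ℝ => 2 * x) (f z) = 2 := by simp
  rwa [hderiv, hderiv2] at h

/- Rotating an orthonormal frame does not change the trace of a bilinear form. -/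
lemma bilinear_apply_add_apply_mul_I (B : ℂ →L[ℝ] ℂ →L[ℝ] ℝ) (a : ℂ) :
    B a a + B (a * Complex.I) (a * Complex.I) =
      ‖a‖ ^ 2 * (B 1 1 + B Complex.I Complex.I) := by
  have ha : a = a.re • (1 : ℂ) + a.im • Complex.I := by simp
  have haI : a * Complex.I = a.re • Complex.I + (-a.im) • (1 : ℂ) := by
    apply Complex.ext <;> simp
  have hsum : ∀ x y : ℝ, B (x • 1 + y • Complex.I) (x • 1 + y • Complex.I) +
      B (x • Complex.I + (-y) • 1) (x • Complex.I + (-y) • 1) =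
        (x ^ 2 + y ^ 2) * (B 1 1 + B Complex.I Complex.I) := fun x y => by
    simp only [map_add, map_smul, add_apply, smul_apply, smul_eq_mul]
    ring
  rw [haI, Complex.sq_norm, Complex.normSq_apply, ← sq, ← sq, ← hsum, ← ha]

lemma laplacian_comp_const_add_exp {W : ℂ → ℝ} {c z : ℂ}
    (hW : ContDiffAt ℝ 2 W (c + Complex.exp z)) :
    Δ (fun w => W (c + Complex.exp w)) z =
      ‖Complex.exp z‖ ^ 2 * Δ W (c + Complex.exp z) := by
  have hexp : ContDiffAt ℝ 2 (fun w => c + Complex.exp w) z := by fun_prop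
  have hderiv : fderiv ℝ (fun w => c + Complex.exp w) = fun w =>
      ContinuousLinearMap.mul ℝ ℂ (Complex.exp w) := by
    ext1 w
    rw [(((Complex.hasDerivAt_exp w).hasFDerivAt.restrictScalars ℝ).const_add c).fderiv]
    ext; simp [mul_comm]
  have hderiv2 : ∀ v w, fderiv ℝ (fun w => ContinuousLinearMap.mul ℝ ℂ (Complex.exp w)) z v w
      = Complex.exp z * v * w := fun v w => by
    have h : HasFDerivAt (fun w => ContinuousLinearMap.mul ℝ ℂ (Complex.exp w)) _ z :=
      (ContinuousLinearMap.mul ℝ ℂ).hasFDerivAt.comp z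
        ((Complex.hasDerivAt_exp z).hasFDerivAt.restrictScalars ℝ)
    simp [h.fderiv, mul_comm v]
  have h := fderiv_fderiv_comp (f := W) (h := fun w => c + Complex.exp w) hW hexp
  have hrot := bilinear_apply_add_apply_mul_I (fderiv ℝ (fderiv ℝ W) (c + Complex.exp z))
    (Complex.exp z)
  rw [laplacian_eq_fderiv_fderiv W, laplacian_eq_fderiv_fderiv, ← hrot]
  simp only [Function.comp_def, hderiv, hderiv2] at h
  simp only [h, ContinuousLinearMap.mul_apply', mul_assoc, Complex.I_mul_I, mul_one, mul_neg,
    map_neg]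
  ring

lemma laplacian_clm_sub_sq (L : ℂ →L[ℝ] ℝ) (c z : ℂ) :
    Δ (fun w => L (w - c) ^ 2) z = 2 * (L 1 ^ 2 + L Complex.I ^ 2) := by
  have hderiv : fderiv ℝ (fun w => L (w - c)) = fun _ => L := by
    ext1 w
    exact (L.hasFDerivAt.comp w ((hasFDerivAt_id w).sub_const c)).fderiv
  rw [laplacian_sq (by fun_prop), laplacian_eq_fderiv_fderiv, hderiv]
  simp

lemma laplacian_norm_sub_sq (c z : ℂ) : Δ (fun w => ‖w - c‖ ^ 2) z = 4 := by
  have hsplit : (fun w => ‖w - c‖ ^ 2) =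
      (fun w => Complex.reCLM (w - c) ^ 2) + fun w => Complex.imCLM (w - c) ^ 2 := by
    ext w
    simp [Complex.sq_norm, Complex.normSq_apply, ← sq]
  rw [hsplit, ContDiffAt.laplacian_add (by fun_prop) (by fun_prop), laplacian_clm_sub_sq,
    laplacian_clm_sub_sq]
  norm_num

/-- Twice continuously differentiable functions on `B` that are subharmonic in the sense that their
Laplacian is nonnegative. Differentiability is required at the points of `B`, not within `B`. -/
structure IsC2SubharmonicOn (f : ℂ → ℝ) (B : Set ℂ) : Prop where
  contDiffAt : ∀ z ∈ B, ContDiffAt ℝ 2 f z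
  laplacian_nonneg : ∀ z ∈ B, 0 ≤ Δ f z

namespace IsC2SubharmonicOn

variable {f : ℂ → ℝ} {B : Set ℂ}

lemma continuousOn (hf : IsC2SubharmonicOn f B) : ContinuousOn f B :=
  fun z hz => (hf.contDiffAt z hz).continuousAt.continuousWithinAt

lemma mono (hf : IsC2SubharmonicOn f B) {B' : Set ℂ} (h : B' ⊆ B) : IsC2SubharmonicOn f B' :=
  ⟨fun z hz => hf.contDiffAt z (h hz), fun z hz => hf.laplacian_nonneg z (h hz)⟩

lemma comp_convex (hf : IsC2SubharmonicOn f B) {Ψ : ℝ → ℝ} (hΨ : ContDiff ℝ 2 Ψ)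
    (hmono : ∀ x, 0 ≤ deriv Ψ x) (hconv : ∀ x, 0 ≤ deriv (deriv Ψ) x) :
    IsC2SubharmonicOn (Ψ ∘ f) B where
  contDiffAt z hz := hΨ.contDiffAt.comp z (hf.contDiffAt z hz)
  laplacian_nonneg z hz := by
    rw [laplacian_comp_real hΨ.contDiffAt (hf.contDiffAt z hz)]
    exact add_nonneg (mul_nonneg (hconv _) (by positivity))
      (mul_nonneg (hmono _) (hf.laplacian_nonneg z hz))

lemma sq (hf : IsC2SubharmonicOn f B) (hnn : ∀ z ∈ B, 0 ≤ f z) :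
    IsC2SubharmonicOn (fun z => f z ^ 2) B where
  contDiffAt z hz := (hf.contDiffAt z hz).pow 2
  laplacian_nonneg z hz := by
    have := hnn z hz
    have := hf.laplacian_nonneg z hz
    rw [laplacian_sq (hf.contDiffAt z hz)]
    positivity

lemma comp_const_add_exp {W : ℂ → ℝ} {c : ℂ} {b : ℝ}
    (hW : IsC2SubharmonicOn W (ball c (rexp b))) :
    IsC2SubharmonicOn (fun w => W (c + Complex.exp w)) {w | w.re < b} := by
  have hmem : ∀ w : ℂ, w.re < b → c + Complex.exp w ∈ ball c (rexp b) := fun w hw => by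
    simpa [Complex.norm_exp] using hw
  refine ⟨fun w hw => ?_, fun w hw => ?_⟩
  · exact (hW.contDiffAt _ (hmem w hw)).comp w (by fun_prop)
  · rw [laplacian_comp_const_add_exp (hW.contDiffAt _ (hmem w hw))]
    exact mul_nonneg (by positivity) (hW.laplacian_nonneg _ (hmem w hw))

end IsC2SubharmonicOn

/-! ### Circle averages in logarithmic polar coordinates -/

lemma hasDerivAt_intervalIntegral_of_continuousOn {f f' : ℝ → ℝ → ℝ} {U : Set ℝ} (hU : IsOpen U)
    (hf : ∀ t ∈ U, ∀ θ, HasDerivAt (fun s => f s θ) (f' t θ) t)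
    (hc : ∀ t ∈ U, Continuous (f t))
    (hc' : ContinuousOn (Function.uncurry f') (U ×ˢ univ)) {t : ℝ} (ht : t ∈ U) (a b : ℝ) :
    HasDerivAt (fun s => ∫ θ in a..b, f s θ) (∫ θ in a..b, f' t θ) t := by
  obtain ⟨r, hr, hrU⟩ := nhds_basis_closedBall.mem_iff.1 (hU.mem_nhds ht)
  have hK : IsCompact (closedBall t r ×ˢ uIcc a b) :=
    (isCompact_closedBall t r).prod isCompact_uIcc
  obtain ⟨C, hC⟩ := hK.exists_bound_of_continuousOn
    (hc'.mono (prod_mono hrU (subset_univ _)))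
  have hct : Continuous (f' t) := by
    rw [← continuousOn_univ]
    exact hc'.comp (f := fun θ => (t, θ)) (by fun_prop) fun θ _ => ⟨ht, mem_univ _⟩
  refine (intervalIntegral.hasDerivAt_integral_of_dominated_loc_of_deriv_le (bound := fun _ => C)
    (closedBall_mem_nhds t hr) ?_ ((hc t ht).intervalIntegrable _ _)
    hct.aestronglyMeasurable ?_ (by simp) ?_).2
  · filter_upwards [hU.mem_nhds ht] with s hs using (hc s hs).aestronglyMeasurable
  · exact Eventually.of_forall fun θ hθ s hs => hC (s, θ) ⟨hs, uIoc_subset_uIcc hθ⟩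
  · exact Eventually.of_forall fun θ _ s hs => hf s (hrU hs) θ

/-- The integral of `U` over the period segment `{t + iθ : 0 ≤ θ ≤ 2π}` of a `2πi`-periodic
function. -/
noncomputable def sliceIntegral (U : ℂ → ℝ) (t : ℝ) : ℝ :=
  ∫ θ in (0 : ℝ)..2 * π, U (t + θ * Complex.I)

section SliceIntegral

variable {U : ℂ → ℝ} {b t : ℝ}

lemma hasDerivAt_ofReal_add {θ : ℝ} (hU : DifferentiableAt ℝ U (t + θ * Complex.I)) :
    HasDerivAt (fun s : ℝ => U (s + θ * Complex.I)) (fderiv ℝ U (t + θ * Complex.I) 1) t := by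
  have h : HasDerivAt (fun s : ℝ => (s + θ * Complex.I : ℂ)) 1 t :=
    ((hasDerivAt_id t).ofReal_comp).add_const _
  exact hU.hasFDerivAt.comp_hasDerivAt t h

lemma hasDerivAt_add_ofReal_mul_I {θ : ℝ} (hU : DifferentiableAt ℝ U (t + θ * Complex.I)) :
    HasDerivAt (fun s : ℝ => U (t + s * Complex.I))
      (fderiv ℝ U (t + θ * Complex.I) Complex.I) θ := by
  have h : HasDerivAt (fun s : ℝ => (t + s * Complex.I : ℂ)) Complex.I θ := by
    simpa using ((hasDerivAt_id θ).ofReal_comp.mul_const Complex.I).const_add (t : ℂ)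
  exact hU.hasFDerivAt.comp_hasDerivAt θ h

lemma continuous_slice (hU : ContinuousOn U {w | w.re < b}) (ht : t < b) :
    Continuous fun θ : ℝ => U (t + θ * Complex.I) :=
  hU.comp_continuous (by fun_prop) fun θ => by simpa

lemma continuousOn_fderiv_apply {B : Set ℂ} (hU : ∀ w ∈ B, ContDiffAt ℝ 1 U w) (v : ℂ) :
    ContinuousOn (fun w => fderiv ℝ U w v) B := fun w hw =>
  (((hU w hw).fderiv_right (m := 0) (by norm_num)).continuousAt.clm_apply
    continuousAt_const).continuousWithinAt

lemma periodic_slice (hper : Function.Periodic U (2 * π * Complex.I)) (t : ℝ) :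
    Function.Periodic (fun θ : ℝ => U (t + θ * Complex.I)) (2 * π) := fun θ => by
  calc U (t + (θ + 2 * π : ℝ) * Complex.I) = U (t + θ * Complex.I + 2 * π * Complex.I) := by
        push_cast; ring_nf
    _ = U (t + θ * Complex.I) := hper _

lemma hasDerivAt_sliceIntegral (hU : ∀ w ∈ {w : ℂ | w.re < b}, ContDiffAt ℝ 1 U w)
    (ht : t < b) :
    HasDerivAt (sliceIntegral U) (sliceIntegral (fun w => fderiv ℝ U w 1) t) t := by
  have hdiff : ∀ w ∈ {w : ℂ | w.re < b}, DifferentiableAt ℝ U w := fun w hw =>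
    (hU w hw).differentiableAt (by simp)
  refine hasDerivAt_intervalIntegral_of_continuousOn (U := Iio b)
    (f := fun (s θ : ℝ) => U (s + θ * Complex.I))
    (f' := fun (s θ : ℝ) => fderiv ℝ U (s + θ * Complex.I) 1) isOpen_Iio
    (fun s hs θ => hasDerivAt_ofReal_add (hdiff _ (by simpa using hs)))
    (fun s hs => continuous_slice
      (fun w hw => (hdiff w hw).continuousAt.continuousWithinAt) hs) ?_ ht _ _
  exact (continuousOn_fderiv_apply hU 1).comp
    (f := fun p : ℝ × ℝ => (p.1 + p.2 * Complex.I : ℂ)) (by fun_prop) fun p hp => by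
      simpa using hp.1

lemma sliceIntegral_fderiv_I (hU : ∀ w ∈ {w : ℂ | w.re < b}, ContDiffAt ℝ 1 U w)
    (ht : t < b) (hper : Function.Periodic U (2 * π * Complex.I)) :
    sliceIntegral (fun w => fderiv ℝ U w Complex.I) t = 0 := by
  rw [sliceIntegral, intervalIntegral.integral_eq_sub_of_hasDerivAt
    (fun θ _ => hasDerivAt_add_ofReal_mul_I ((hU _ (by simpa)).differentiableAt (by simp)))
    ((continuous_slice (continuousOn_fderiv_apply hU _) ht).intervalIntegrable _ _), sub_eq_zero]
  simpa using periodic_slice hper t 0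

end SliceIntegral

lemma hasDerivAt_sliceIntegral_fderiv_one {U : ℂ → ℝ} {b t : ℝ}
    (hU : ∀ w ∈ {w : ℂ | w.re < b}, ContDiffAt ℝ 2 U w)
    (hper : Function.Periodic U (2 * π * Complex.I)) (ht : t < b) :
    HasDerivAt (sliceIntegral fun w => fderiv ℝ U w 1) (sliceIntegral (Δ U) t) t := by
  have hfderiv : ∀ v : ℂ, ∀ w ∈ {w : ℂ | w.re < b}, ContDiffAt ℝ 1 (fun w => fderiv ℝ U w v) w :=
    fun v w hw => ((hU w hw).fderiv_right (m := 1) (by norm_num)).clm_apply contDiffAt_const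
  have hderiv := hasDerivAt_sliceIntegral (hfderiv 1) ht
  have hperI : Function.Periodic (fun w => fderiv ℝ U w Complex.I) (2 * π * Complex.I) :=
    fun w => by
      simp only [← fderiv_comp_add_right, hper.funext]
  have hzero := sliceIntegral_fderiv_I (hfderiv Complex.I) ht hperI
  have hcont : ∀ v, Continuous fun θ : ℝ =>
      fderiv ℝ (fun w => fderiv ℝ U w v) (t + θ * Complex.I) v := fun v =>
    continuous_slice (continuousOn_fderiv_apply (hfderiv v) v) ht
  refine hderiv.congr_deriv ?_
  rw [← add_zero (sliceIntegral _ t), ← hzero]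
  simp only [sliceIntegral]
  rw [← intervalIntegral.integral_add ((hcont 1).intervalIntegrable _ _)
    ((hcont Complex.I).intervalIntegrable _ _)]
  refine intervalIntegral.integral_congr fun θ _ => ?_
  have h' := ((hU (t + θ * Complex.I) (by simpa)).fderiv_right (m := 1)
    (by norm_num)).differentiableAt (by simp)
  simp [laplacian_eq_fderiv_fderiv, fderiv_clm_apply h' (differentiableAt_const _)]

lemma periodic_comp_const_add_exp (W : ℂ → ℝ) (c : ℂ) :
    Function.Periodic (fun w => W (c + Complex.exp w)) (2 * π * Complex.I) := fun w => by
  simp only [Complex.exp_periodic w]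

lemma sliceIntegral_comp_const_add_exp (W : ℂ → ℝ) (c : ℂ) (t : ℝ) :
    sliceIntegral (fun w => W (c + Complex.exp w)) t = 2 * π * circleAverage W c (rexp t) := by
  simp only [sliceIntegral, circleAverage_def, circleMap, Complex.exp_add, Complex.ofReal_exp,
    smul_eq_mul]
  rw [mul_inv_cancel_left₀ two_pi_pos.ne']

namespace IsC2SubharmonicOn

variable {W : ℂ → ℝ} {c : ℂ} {b t ρ : ℝ}

lemma continuousOn_circleAverage (hW : IsC2SubharmonicOn W (ball c ρ)) :
    ContinuousOn (circleAverage W c) (Ico 0 ρ) := by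
  refine Real.ContinuousOn.circleAverage (hW.continuousOn.mono fun z hz => ?_) fun r hr => hr.1
  simpa [dist_eq_norm] using hz.2

lemma circleIntegrable (hW : IsC2SubharmonicOn W (ball c ρ)) {r : ℝ} (hr : r ∈ Ico 0 ρ) :
    CircleIntegrable W c r :=
  (hW.continuousOn.mono (sphere_subset_ball hr.2)).circleIntegrable hr.1

lemma sliceIntegral_fderiv_one_nonneg (hW : IsC2SubharmonicOn W (ball c (rexp b)))
    (ht : t < b) :
    0 ≤ sliceIntegral (fun w => fderiv ℝ (fun w => W (c + Complex.exp w)) w 1) t := by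
  have hU := hW.comp_const_add_exp
  have hlim : Tendsto (sliceIntegral fun w => W (c + Complex.exp w)) atBot
      (𝓝 (2 * π * circleAverage W c 0)) := by
    have h0 := (hW.continuousOn_circleAverage 0 ⟨le_rfl, exp_pos b⟩).tendsto.const_mul (2 * π)
    refine (h0.comp (tendsto_nhdsWithin_iff.2 ⟨tendsto_exp_atBot, ?_⟩)).congr fun t =>
      (sliceIntegral_comp_const_add_exp W c t).symm
    filter_upwards [eventually_lt_atBot b] with t ht using ⟨(exp_pos t).le, exp_lt_exp.2 ht⟩
  refine deriv_nonneg_of_bddAbove_atBot (b := b)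
    (fun s hs => hasDerivAt_sliceIntegral (fun w hw => (hU.contDiffAt w hw).of_le (by simp)) hs)
    (fun s hs => hasDerivAt_sliceIntegral_fderiv_one hU.contDiffAt
      (periodic_comp_const_add_exp W c) hs) (fun s hs => ?_)
    (hlim.eventually_le_const (lt_add_one _)) ht
  exact intervalIntegral.integral_nonneg two_pi_pos.le fun θ _ =>
    hU.laplacian_nonneg _ (by simpa)

lemma monotoneOn_circleAverage (hW : IsC2SubharmonicOn W (ball c ρ)) :
    MonotoneOn (circleAverage W c) (Ico 0 ρ) := by
  rcases le_or_gt ρ 0 with hρ | hρ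
  · rw [Ico_eq_empty hρ.not_gt]
    exact fun _ h => h.elim
  obtain ⟨b, rfl⟩ : ∃ b, rexp b = ρ := ⟨Real.log ρ, exp_log hρ⟩
  have hU := hW.comp_const_add_exp
  have hlog : ∀ r ∈ Ioo 0 (rexp b), Real.log r < b := fun r hr => (log_lt_iff_lt_exp hr.1).2 hr.2
  refine monotoneOn_of_hasDerivWithinAt_nonneg (convex_Ico 0 _) hW.continuousOn_circleAverage
    (f' := fun r => (2 * π)⁻¹ * (sliceIntegral
      (fun w => fderiv ℝ (fun w => W (c + Complex.exp w)) w 1) (Real.log r) * r⁻¹)) ?_ ?_ <;>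
    rw [interior_Ico]
  · intro r hr
    have hderiv := ((hasDerivAt_sliceIntegral (fun w hw => (hU.contDiffAt w hw).of_le (by simp))
      (hlog r hr)).comp r (hasDerivAt_log hr.1.ne')).const_mul (2 * π)⁻¹
    refine (hderiv.congr_of_eventuallyEq ?_).hasDerivWithinAt
    filter_upwards [lt_mem_nhds hr.1] with s hs
    rw [Function.comp_apply, sliceIntegral_comp_const_add_exp, exp_log hs,
      inv_mul_cancel_left₀ two_pi_pos.ne']
  · exact fun r hr => mul_nonneg (by positivity) (mul_nonneg
      (hW.sliceIntegral_fderiv_one_nonneg (hlog r hr)) (inv_nonneg.2 hr.1.le))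

lemma le_circleAverage (hW : IsC2SubharmonicOn W (ball c ρ)) {r : ℝ} (hr : r ∈ Ico 0 ρ) :
    W c ≤ circleAverage W c r := by
  simpa using hW.monotoneOn_circleAverage ⟨le_rfl, hr.1.trans_lt hr.2⟩ hr hr.1

end IsC2SubharmonicOn

/-! ### Carleman's estimate -/

section Carleman

variable {U : ℂ → ℝ} {b k t : ℝ}

lemma sliceIntegral_nonneg (t : ℝ) (hU : ∀ w, 0 ≤ U w) : 0 ≤ sliceIntegral U t :=
  intervalIntegral.integral_nonneg two_pi_pos.le fun _ _ => hU _

lemma sq_sliceIntegral_fderiv_sq_le (hU : ∀ w ∈ {w : ℂ | w.re < b}, ContDiffAt ℝ 1 U w)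
    (ht : t < b) :
    sliceIntegral (fun w => fderiv ℝ (fun w => U w ^ 2) w 1) t ^ 2 ≤
      4 * (sliceIntegral (fun w => U w ^ 2) t * sliceIntegral (fun w => fderiv ℝ U w 1 ^ 2) t) := by
  have hφ' : sliceIntegral (fun w => fderiv ℝ (fun w => U w ^ 2) w 1) t =
      2 * ∫ θ in 0..2 * π, U (t + θ * Complex.I) * fderiv ℝ U (t + θ * Complex.I) 1 := by
    rw [← intervalIntegral.integral_const_mul]
    refine intervalIntegral.integral_congr fun θ _ => ?_
    simp only [fderiv_fun_pow 2 ((hU (t + θ * Complex.I) (by simpa)).differentiableAt (by simp))]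
    simp [mul_assoc]
  have hcs := intervalIntegral_mul_sq_le
    (continuous_slice (fun w hw => (hU w hw).continuousAt.continuousWithinAt) ht)
    (continuous_slice (continuousOn_fderiv_apply hU 1) ht) two_pi_pos.le
  simp only [sliceIntegral] at hφ' ⊢
  rw [hφ', mul_pow]
  linarith

lemma two_mul_add_le_sliceIntegral_laplacian_sq (hU : IsC2SubharmonicOn U {w | w.re < b})
    (hnn : ∀ w ∈ {w : ℂ | w.re < b}, 0 ≤ U w) (ht : t < b) :
    2 * (sliceIntegral (fun w => fderiv ℝ U w 1 ^ 2) t +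
      sliceIntegral (fun w => fderiv ℝ U w Complex.I ^ 2) t) ≤
      sliceIntegral (Δ fun w => U w ^ 2) t := by
  have hmem : ∀ θ : ℝ, (t + θ * Complex.I : ℂ) ∈ {w : ℂ | w.re < b} := fun θ => by simpa
  have hcont : ∀ v, Continuous fun θ : ℝ => fderiv ℝ U (t + θ * Complex.I) v ^ 2 := fun v =>
    (continuous_slice (continuousOn_fderiv_apply
      (fun w hw => (hU.contDiffAt w hw).of_le (by simp)) v) ht).pow 2
  have hlap : Continuous fun θ : ℝ => Δ (fun w => U w ^ 2) (t + θ * Complex.I) :=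
    continuous_slice (fun w hw => (continuousAt_laplacian
      ((hU.contDiffAt w hw).pow 2)).continuousWithinAt) ht
  simp only [sliceIntegral]
  rw [← intervalIntegral.integral_add ((hcont 1).intervalIntegrable _ _)
    ((hcont Complex.I).intervalIntegrable _ _), ← intervalIntegral.integral_const_mul]
  refine intervalIntegral.integral_mono_on two_pi_pos.le
    (Continuous.intervalIntegrable (by fun_prop) _ _) (hlap.intervalIntegrable _ _) fun θ _ => ?_
  rw [laplacian_sq (hU.contDiffAt _ (hmem θ))]
  have := hnn _ (hmem θ)
  have := hU.laplacian_nonneg _ (hmem θ)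
  exact le_add_of_nonneg_right (by positivity)

lemma sq_add_sq_le_two_mul_sliceIntegral_laplacian (hU : IsC2SubharmonicOn U {w | w.re < b})
    (hnn : ∀ w ∈ {w : ℂ | w.re < b}, 0 ≤ U w) (ht : t < b)
    (hk : k ^ 2 * sliceIntegral (fun w => U w ^ 2) t ≤
      sliceIntegral (fun w => fderiv ℝ U w Complex.I ^ 2) t) :
    sliceIntegral (fun w => fderiv ℝ (fun w => U w ^ 2) w 1) t ^ 2 +
        (2 * k * sliceIntegral (fun w => U w ^ 2) t) ^ 2 ≤
      2 * sliceIntegral (fun w => U w ^ 2) t * sliceIntegral (Δ fun w => U w ^ 2) t := by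
  have hφ' := sq_sliceIntegral_fderiv_sq_le
    (fun w hw => (hU.contDiffAt w hw).of_le (by simp)) ht
  have hφ'' := two_mul_add_le_sliceIntegral_laplacian_sq hU hnn ht
  have hφ : 0 ≤ sliceIntegral (fun w => U w ^ 2) t := sliceIntegral_nonneg t fun w => sq_nonneg _
  nlinarith [mul_le_mul_of_nonneg_left hk hφ, mul_le_mul_of_nonneg_left hφ'' hφ]

lemma sq_mul_sliceIntegral_sq_le (hU : ∀ w ∈ {w : ℂ | w.re < b}, ContDiffAt ℝ 1 U w)
    (hper : Function.Periodic U (2 * π * Complex.I)) (ht : t < b) (hk : 0 ≤ k) {θ₀ : ℝ}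
    (hzero : U (t + θ₀ * Complex.I) = 0)
    (hm : k * volume.real ({θ : ℝ | U (t + θ * Complex.I) ≠ 0} ∩ Ioc 0 (2 * π)) < π) :
    k ^ 2 * sliceIntegral (fun w => U w ^ 2) t ≤
      sliceIntegral (fun w => fderiv ℝ U w Complex.I ^ 2) t :=
  sq_mul_integral_sq_le_of_periodic
    (fun θ => hasDerivAt_add_ofReal_mul_I ((hU _ (by simpa)).differentiableAt (by simp)))
    (continuous_slice (continuousOn_fderiv_apply hU _) ht) two_pi_pos.le
    (periodic_slice hper t) hk hzero hm

end Carleman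

lemma log_mul_sqrt_mul {a b c : ℝ} (ha : 0 < a) (hb : 0 < b) (hc : 0 < c) :
    Real.log (a * √(b * c)) = Real.log √b + Real.log (a * √c) := by
  rw [sqrt_mul hb.le, mul_left_comm, log_mul (by positivity) (by positivity)]

/- Carleman's differential inequality in logarithmic polar coordinates `z = exp (t + iθ)`: if
`φ t` is the mean of `W²` over the circle, then `φ'² ≤ 2 φ φ''`, and Wirtinger's inequality improves
this to `φ'² + (2kφ)² ≤ 2 φ φ''` on `E`. -/
lemma IsC2SubharmonicOn.mul_measureReal_le_log {W : ℂ → ℝ} {b k t₁ t₂ : ℝ} {E : Set ℝ}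
    (hW : IsC2SubharmonicOn W (ball 0 (rexp b)))
    (hnn : ∀ z ∈ ball 0 (rexp b), 0 ≤ W z) (hk : 0 < k) (ht : t₁ ≤ t₂) (htb : t₂ + 1 < b)
    (hE : MeasurableSet E)
    (hpos : 0 < circleAverage (fun z => W z ^ 2) 0 (rexp t₁))
    (hWE : ∀ t ∈ E ∩ Icc t₁ t₂, (∃ θ : ℝ, W (Complex.exp (t + θ * Complex.I)) = 0) ∧
      k * volume.real ({θ : ℝ | W (Complex.exp (t + θ * Complex.I)) ≠ 0} ∩ Ioc 0 (2 * π)) < π) :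
    k * volume.real (E ∩ Icc t₁ t₂) ≤
      Real.log ((1 + k) * √(circleAverage (fun z => W z ^ 2) 0 (rexp (t₂ + 1)))) -
        Real.log (k * √(circleAverage (fun z => W z ^ 2) 0 (rexp t₁))) := by
  set U : ℂ → ℝ := fun w => W (0 + Complex.exp w) with hUdef
  have hU : IsC2SubharmonicOn U {w | w.re < b} := hW.comp_const_add_exp
  have hU1 : ∀ w ∈ {w : ℂ | w.re < b}, ContDiffAt ℝ 1 U w := fun w hw =>
    (hU.contDiffAt w hw).of_le (by simp)
  have hUnn : ∀ w ∈ {w : ℂ | w.re < b}, 0 ≤ U w := fun w hw =>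
    hnn _ (by simpa [Complex.norm_exp] using hw)
  have hper := periodic_comp_const_add_exp W 0
  have hW2 := hW.sq hnn
  have hφ : ∀ t, sliceIntegral (fun w => U w ^ 2) t =
      2 * π * circleAverage (fun z => W z ^ 2) 0 (rexp t) :=
    sliceIntegral_comp_const_add_exp (fun z => W z ^ 2) 0
  have hlt : ∀ t ∈ Icc t₁ (t₂ + 1), t < b := fun t h => h.2.trans_lt htb
  have havg : ∀ t ∈ Icc t₁ (t₂ + 1), 0 < circleAverage (fun z => W z ^ 2) 0 (rexp t) :=
    fun t h => hpos.trans_le (hW2.monotoneOn_circleAverage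
      ⟨(exp_pos _).le, exp_lt_exp.2 (h.1.trans_lt (hlt t h))⟩
      ⟨(exp_pos _).le, exp_lt_exp.2 (hlt t h)⟩ (exp_le_exp.2 h.1))
  have hgrowth := mul_measureReal_le_log_sqrt (φ := sliceIntegral fun w => U w ^ 2) hk ht hE
    (fun t h => hasDerivAt_sliceIntegral (fun w hw => (hU1 w hw).pow 2) (hlt t h))
    (fun t h => hasDerivAt_sliceIntegral_fderiv_one (fun w hw => (hU.contDiffAt w hw).pow 2)
      (hper.comp (· ^ 2)) (hlt t h))
    (fun t h => hφ t ▸ mul_pos two_pi_pos (havg t h))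
    (fun t h => hW2.sliceIntegral_fderiv_one_nonneg (hlt t h)) (fun t h => ?_) (fun t h => ?_)
  · rwa [hφ, hφ, log_mul_sqrt_mul (by positivity) two_pi_pos (havg _ ⟨by linarith, le_rfl⟩),
      log_mul_sqrt_mul hk two_pi_pos hpos, add_sub_add_left_eq_sub] at hgrowth
  · simpa using sq_add_sq_le_two_mul_sliceIntegral_laplacian (k := 0) hU hUnn (hlt t h)
      (by simpa using sliceIntegral_nonneg t fun w => sq_nonneg (fderiv ℝ U w Complex.I))
  · obtain ⟨⟨θ₀, hzero⟩, hm⟩ := hWE t h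
    have htb' : t < b := by linarith [h.2.2]
    exact sq_add_sq_le_two_mul_sliceIntegral_laplacian hU hUnn htb'
      (sq_mul_sliceIntegral_sq_le hU1 hper htb' hk.le (by simpa [hUdef] using hzero)
        (by simpa [hUdef] using hm))

/-! ### Sub-mean value inequalities -/

lemma isC2SubharmonicOn_neg_sub_norm_sq {f : ℂ → ℝ} {c : ℂ} {B : Set ℂ} {η : ℝ}
    (hf : ∀ z ∈ B, ContDiffAt ℝ 2 f z) (hη : ∀ z ∈ B, Δ f z ≤ -(4 * η)) :
    IsC2SubharmonicOn (-f - η • fun z => ‖z - c‖ ^ 2) B := by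
  have hnorm : ∀ z, ContDiffAt ℝ 2 (fun z : ℂ => ‖z - c‖ ^ 2) z := fun z =>
    ContDiffAt.norm_sq ℝ (by fun_prop)
  refine ⟨fun z hz => (hf z hz).neg.sub ((hnorm z).const_smul η), fun z hz => ?_⟩
  rw [ContDiffAt.laplacian_sub (f₁ := -f) (f₂ := η • fun z => ‖z - c‖ ^ 2) (hf z hz).neg
    ((hnorm z).const_smul η), InnerProductSpace.laplacian_neg,
    InnerProductSpace.laplacian_smul _ (hnorm z)]
  simp only [Pi.neg_apply, smul_eq_mul, laplacian_norm_sub_sq]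
  linarith [hη z hz]

/- If `Δ f z < 0`, then `-f - η ‖· - z‖²` is subharmonic near `z` for small `η > 0`, so its mean
value inequality contradicts the one for `f`. -/
lemma laplacian_nonneg_of_le_circleAverage {f : ℂ → ℝ} {z : ℂ} (hf : ContDiffAt ℝ 2 f z)
    (hle : ∀ r > 0, f z ≤ circleAverage f z r) : 0 ≤ Δ f z := by
  by_contra! hneg
  obtain ⟨η, hη, hfη⟩ : ∃ η > 0, Δ f z < -(4 * η) := ⟨-Δ f z / 8, by linarith, by linarith⟩
  obtain ⟨ρ, hρ, hball⟩ := eventually_nhds_iff_ball.1 ((hf.eventually (by simp)).and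
    ((continuousAt_laplacian hf).eventually_lt_const hfη))
  have hW : IsC2SubharmonicOn (-f - η • fun w => ‖w - z‖ ^ 2) (ball z ρ) :=
    isC2SubharmonicOn_neg_sub_norm_sq (fun w hw => (hball w hw).1) fun w hw => (hball w hw).2.le
  have hr : ρ / 2 ∈ Ico 0 ρ := ⟨by linarith, by linarith⟩
  have hint : CircleIntegrable f z (ρ / 2) := ContinuousOn.circleIntegrable hr.1 fun w hw =>
    (hball w (sphere_subset_ball hr.2 hw)).1.continuousAt.continuousWithinAt
  have havg : circleAverage (-f - η • fun w => ‖w - z‖ ^ 2) z (ρ / 2) =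
      -circleAverage f z (ρ / 2) - η * (ρ / 2) ^ 2 := by
    rw [circleAverage_congr_sphere (f₂ := (-1 : ℝ) • f - fun _ => η * (ρ / 2) ^ 2)
      fun w hw => ?_, circleAverage_sub hint.const_smul (circleIntegrable_const _ _ _),
      circleAverage_smul, circleAverage_const, neg_one_smul]
    rw [mem_sphere_iff_norm, abs_of_nonneg hr.1] at hw
    simp [hw]
  have hWz := hW.le_circleAverage hr
  rw [havg] at hWz
  simp only [Pi.sub_apply, Pi.neg_apply, Pi.smul_apply, sub_self, norm_zero, smul_eq_mul] at hWz
  nlinarith [hle (ρ / 2) (half_pos hρ), mul_pos hη (pow_pos (half_pos hρ) 2)]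

lemma integrableOn_polarCoord_symm {E : Type*} [NormedAddCommGroup E] [NormedSpace ℝ E]
    {f : ℂ → E} (hf : Integrable f) :
    IntegrableOn (fun p : ℝ × ℝ => p.1 • f (Complex.polarCoord.symm p)) polarCoord.target := by
  have hf' : Integrable (f ∘ Complex.measurableEquivRealProd.symm) :=
    (Complex.volume_preserving_equiv_real_prod.symm.integrable_comp_emb
      Complex.measurableEquivRealProd.symm.measurableEmbedding).2 hf
  refine ((integrableOn_image_iff_integrableOn_abs_det_fderiv_smul _
    polarCoord.open_target.measurableSet
    (fun p _ => (hasFDerivAt_polarCoord_symm p).hasFDerivWithinAt) polarCoord.symm.injOn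
    (f ∘ Complex.measurableEquivRealProd.symm)).1 hf'.integrableOn).congr_fun (fun p hp => ?_)
    polarCoord.open_target.measurableSet
  beta_reduce
  rw [det_fderivPolarCoordSymm, abs_of_pos hp.1, Function.comp_apply,
    Complex.measurableEquivRealProd_symm_polarCoord_symm_apply]

lemma setIntegral_polarCoord_symm (f : ℂ → ℝ) (r : ℝ) :
    ∫ θ in Ioo (-π) π, r * f (Complex.polarCoord.symm (r, θ)) =
      2 * π * (r * circleAverage f 0 r) := by
  have h := ((periodic_circleMap 0 r).comp f).intervalIntegral_add_eq (-π) 0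
  rw [zero_add, show -π + 2 * π = π by ring] at h
  rw [integral_const_mul, mul_left_comm, circleAverage_def, smul_eq_mul,
    mul_inv_cancel_left₀ two_pi_pos.ne', ← integral_Ioc_eq_integral_Ioo,
    ← intervalIntegral.integral_of_le (by linarith [pi_pos])]
  simpa [circleMap_zero, Complex.exp_mul_I, Function.comp_def] using congrArg (r * ·) h

lemma integrableOn_mul_circleAverage {f : ℂ → ℝ} (hf : Integrable f) :
    IntegrableOn (fun r => r * circleAverage f 0 r) (Ioi 0) := by
  have h := integrableOn_polarCoord_symm hf
  rw [polarCoord_target, IntegrableOn, Measure.volume_eq_prod, ← Measure.prod_restrict] at h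
  refine (h.integral_prod_left.const_mul (2 * π)⁻¹).congr (Eventually.of_forall fun r => ?_)
  simp only [smul_eq_mul, setIntegral_polarCoord_symm, inv_mul_cancel_left₀ two_pi_pos.ne']

lemma integral_eq_integral_mul_circleAverage {f : ℂ → ℝ} (hf : Integrable f) :
    ∫ z, f z = 2 * π * ∫ r in Ioi 0, r * circleAverage f 0 r := by
  have h := integrableOn_polarCoord_symm hf
  rw [← Complex.integral_comp_polarCoord_symm]
  rw [polarCoord_target, IntegrableOn, Measure.volume_eq_prod, ← Measure.prod_restrict] at *
  rw [integral_prod _ h, ← integral_const_mul]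
  simp only [smul_eq_mul, setIntegral_polarCoord_symm]

lemma integral_mono_of_circleAverage_le {f g : ℂ → ℝ} {c : ℂ} (hf : Integrable f)
    (hg : Integrable g) (h : ∀ r > 0, circleAverage f c r ≤ circleAverage g c r) :
    ∫ z, f z ≤ ∫ z, g z := by
  rw [← integral_add_right_eq_self f c, ← integral_add_right_eq_self g c,
    integral_eq_integral_mul_circleAverage (hf.comp_add_right c),
    integral_eq_integral_mul_circleAverage (hg.comp_add_right c)]
  refine mul_le_mul_of_nonneg_left (setIntegral_mono_on
    (integrableOn_mul_circleAverage (hf.comp_add_right c))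
    (integrableOn_mul_circleAverage (hg.comp_add_right c)) measurableSet_Ioi fun r hr => ?_)
    two_pi_pos.le
  rw [circleAverage_map_add_const, circleAverage_map_add_const]
  exact mul_le_mul_of_nonneg_left (h r hr) (le_of_lt hr)

lemma setIntegral_ball_mono_of_circleAverage_le {f g : ℂ → ℝ} {c : ℂ} {s : ℝ}
    (hf : IntegrableOn f (ball c s)) (hg : IntegrableOn g (ball c s))
    (h : ∀ r ∈ Ioo 0 s, circleAverage f c r ≤ circleAverage g c r) :
    ∫ z in ball c s, f z ≤ ∫ z in ball c s, g z := by
  have hball : MeasurableSet (ball c s) := isOpen_ball.measurableSet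
  have havg : ∀ (k : ℂ → ℝ), ∀ r > 0, circleAverage ((ball c s).indicator k) c r =
      if r < s then circleAverage k c r else 0 := fun k r hr => by
    have hsphere : ∀ {z}, z ∈ sphere c |r| → (z ∈ ball c s ↔ r < s) := fun hz => by
      rw [mem_ball, mem_sphere.1 hz, abs_of_pos hr]
    split_ifs with hrs
    · exact circleAverage_congr_sphere fun z hz => indicator_of_mem ((hsphere hz).2 hrs) k
    · rw [circleAverage_congr_sphere (f₂ := fun _ => 0) fun z hz =>
        indicator_of_notMem (mt (hsphere hz).1 hrs) k, circleAverage_const]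
  rw [← integral_indicator hball, ← integral_indicator hball]
  refine integral_mono_of_circleAverage_le (c := c) (hf.integrable_indicator hball)
    (hg.integrable_indicator hball) fun r hr => ?_
  rw [havg f r hr, havg g r hr]
  split_ifs with hrs
  exacts [h r ⟨hr, hrs⟩, le_rfl]

lemma IsC2SubharmonicOn.mul_le_circleAverage {W : ℂ → ℝ} {R s r : ℝ} {z : ℂ}
    (hW : IsC2SubharmonicOn W (ball 0 R)) (h0 : ∀ z ∈ ball 0 R, 0 ≤ W z)
    (hs : 0 < s) (hsr : ‖z‖ + s ≤ r) (hr : r < R) :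
    (s / r) ^ 2 * W z ≤ circleAverage W 0 r := by
  have hr₀ : 0 < r := by linarith [norm_nonneg z]
  have hsub : ball z s ⊆ ball 0 r :=
    ball_subset_ball' (by simpa [add_comm] using hsr)
  have hint : IntegrableOn W (ball 0 r) :=
    ((hW.continuousOn.mono (closedBall_subset_ball hr)).integrableOn_compact
      (isCompact_closedBall 0 r)).mono_set ball_subset_closedBall
  have hvol : ∀ (c : ℂ) {t : ℝ} (a : ℝ), 0 < t → ∫ _ in ball c t, a = π * t ^ 2 * a :=
    fun c t a ht => by
      simp [Measure.real, Complex.volume_ball, ht.le, mul_comm]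
  have hlow : π * s ^ 2 * W z ≤ ∫ w in ball z s, W w := by
    rw [← hvol z _ hs]
    refine setIntegral_ball_mono_of_circleAverage_le
      (integrableOn_const (measure_ball_lt_top).ne) (hint.mono_set hsub) fun t ht => ?_
    rw [circleAverage_const]
    refine (hW.mono (ball_subset_ball' ?_)).le_circleAverage (ρ := s) ⟨ht.1.le, ht.2⟩
    rw [dist_zero_right]
    linarith
  have hup : ∫ w in ball 0 r, W w ≤ π * r ^ 2 * circleAverage W 0 r := by
    rw [← hvol 0 _ hr₀]
    refine setIntegral_ball_mono_of_circleAverage_le hint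
      (integrableOn_const (measure_ball_lt_top).ne) fun t ht => ?_
    rw [circleAverage_const]
    exact hW.monotoneOn_circleAverage ⟨ht.1.le, ht.2.trans hr⟩ ⟨hr₀.le, hr⟩ ht.2.le
  have hmono : ∫ w in ball z s, W w ≤ ∫ w in ball 0 r, W w :=
    setIntegral_mono_set hint ((ae_restrict_mem isOpen_ball.measurableSet).mono
      fun w hw => h0 w (ball_subset_ball hr.le hw)) hsub.eventuallyLE
  have hchain := (hlow.trans hmono).trans hup
  rw [div_pow, div_mul_eq_mul_div, div_le_iff₀ (by positivity)]
  rw [mul_assoc, mul_assoc, mul_le_mul_iff_right₀ pi_pos] at hchain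
  linarith

/-! ### Mollification -/

lemma integrableOn_comp_of_upperSemicontinuous {X Y : Type*} [TopologicalSpace X] [T2Space X]
    [MeasurableSpace X] [OpensMeasurableSpace X] [TopologicalSpace Y] [MeasurableSpace Y]
    [BorelSpace Y] {μ : Measure X} [IsFiniteMeasureOnCompacts μ] {v : Y → ℝ}
    (hv : UpperSemicontinuous v) (h0 : ∀ y, 0 ≤ v y) {A : X → Y} (hA : Continuous A) {K : Set X}
    (hK : IsCompact K) : IntegrableOn (fun x => v (A x)) K μ := by
  obtain ⟨C, hC⟩ := (hv.upperSemicontinuousOn (A '' K)).bddAbove_of_isCompact (hK.image hA)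
  refine Measure.integrableOn_of_bounded (M := C) hK.measure_lt_top.ne
    (hv.measurable.comp hA.measurable).aestronglyMeasurable ?_
  filter_upwards [ae_restrict_mem hK.measurableSet] with x hx
  rw [Real.norm_of_nonneg (h0 _)]
  exact hC (mem_image_of_mem v (mem_image_of_mem A hx))

lemma circleIntegrable_of_upperSemicontinuous {v : ℂ → ℝ} (hv : UpperSemicontinuous v)
    (h0 : ∀ z, 0 ≤ v z) (c : ℂ) (r : ℝ) : CircleIntegrable v c r :=
  (intervalIntegrable_iff_integrableOn_Icc_of_le two_pi_pos.le).2
    (integrableOn_comp_of_upperSemicontinuous hv h0 (continuous_circleMap c r) isCompact_Icc)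

lemma isSubharmonic_iff_le_circleAverage {u : ℂ → ℝ} : IsSubharmonic u ↔
    UpperSemicontinuous u ∧ ∀ z, ∀ r > 0, u z ≤ circleAverage u z r := by
  simp only [IsSubharmonic, circleAverage_def, circleMap, smul_eq_mul, one_div, gt_iff_lt]

lemma IsSubharmonic.le_circleAverage {u : ℂ → ℝ} (hu : IsSubharmonic u) (z : ℂ) {r : ℝ}
    (hr : 0 < r) : u z ≤ circleAverage u z r :=
  (isSubharmonic_iff_le_circleAverage.1 hu).2 z r hr

lemma IsSubharmonic.max_zero {u : ℂ → ℝ} (hu : IsSubharmonic u) :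
    IsSubharmonic fun z => max (u z) 0 := by
  have husc : UpperSemicontinuous fun z => max (u z) 0 := hu.1.sup upperSemicontinuous_const
  have h0 : ∀ z, 0 ≤ max (u z) 0 := fun z => le_max_right _ _
  refine isSubharmonic_iff_le_circleAverage.2 ⟨husc, fun z r hr => ?_⟩
  rcases le_or_gt (u z) 0 with hz | hz
  · rw [max_eq_right hz]
    exact circleAverage_nonneg_of_nonneg fun z _ => h0 z
  have hle := hu.le_circleAverage z hr
  have hint : CircleIntegrable u z r := by
    by_contra hint
    rw [circleAverage.integral_undef hint] at hle
    exact hle.not_gt hz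
  rw [max_eq_left hz.le]
  exact hle.trans (circleAverage_mono hint (circleIntegrable_of_upperSemicontinuous husc h0 z r)
    fun w _ => le_max_left _ _)

/-- A radial mollifier on `ℂ` of class `C²`, supported in the closed disc of radius `δ`. Mathlib's
`ContDiffBump` is not known to be radial. -/
structure IsRadialBump (δ : ℝ) (χ : ℂ → ℝ) : Prop where
  contDiff : ContDiff ℝ 2 χ
  nonneg : ∀ y, 0 ≤ χ y
  eq_zero : ∀ y, y ∉ closedBall 0 δ → χ y = 0
  radial : ∀ y y', ‖y‖ = ‖y'‖ → χ y = χ y'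
  integral_eq_one : ∫ y, χ y = 1

lemma exists_isRadialBump {δ : ℝ} (hδ : 0 < δ) : ∃ χ, IsRadialBump δ χ := by
  set g : ℂ → ℝ := fun y => Real.smoothTransition (1 - ‖y‖ ^ 2 / δ ^ 2) with hg
  have hgc : ContDiff ℝ 2 g := Real.smoothTransition.contDiff.comp
    (contDiff_const.sub ((contDiff_norm_sq ℝ).div_const _))
  have hg0 : ∀ y, 0 ≤ g y := fun y => Real.smoothTransition.nonneg _
  have hgs : ∀ y, y ∉ closedBall 0 δ → g y = 0 := fun y hy => by
    rw [mem_closedBall_zero_iff, not_le] at hy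
    refine Real.smoothTransition.zero_of_nonpos ?_
    rw [sub_nonpos, one_le_div (by positivity)]
    gcongr
  have hpos : 0 < ∫ y, g y :=
    hgc.continuous.integral_pos_of_hasCompactSupport_nonneg_nonzero
      (HasCompactSupport.intro (isCompact_closedBall 0 δ) hgs) hg0 (x := 0) (by simp [hg])
  refine ⟨fun y => (∫ y, g y)⁻¹ * g y, contDiff_const.mul hgc,
    fun y => mul_nonneg (inv_nonneg.2 hpos.le) (hg0 y), fun y hy => by simp [hgs y hy],
    fun y y' h => by simp [hg, h], ?_⟩
  rw [integral_const_mul, inv_mul_cancel₀ hpos.ne']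

namespace IsRadialBump

variable {δ : ℝ} {χ v : ℂ → ℝ}

lemma hasCompactSupport (h : IsRadialBump δ χ) : HasCompactSupport χ :=
  HasCompactSupport.intro (isCompact_closedBall 0 δ) h.eq_zero

lemma integrable (h : IsRadialBump δ χ) : Integrable χ :=
  h.contDiff.continuous.integrable_of_hasCompactSupport h.hasCompactSupport

lemma integrable_mul (h : IsRadialBump δ χ) (hv : UpperSemicontinuous v) (h0 : ∀ z, 0 ≤ v z)
    (z : ℂ) : Integrable fun y => χ y * v (z - y) :=
  (integrableOn_iff_integrable_of_support_subset fun y hy => by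
      contrapose! hy
      simp [h.eq_zero y hy]).1
    ((integrableOn_comp_of_upperSemicontinuous hv h0 (by fun_prop)
      (isCompact_closedBall 0 δ)).continuousOn_mul h.contDiff.continuous.continuousOn
      (isCompact_closedBall 0 δ))

lemma convolution_apply (χ v : ℂ → ℝ) (z : ℂ) : (χ ⋆ v) z = ∫ y, χ y * v (z - y) := rfl

lemma contDiff_convolution (h : IsRadialBump δ χ) (hv : UpperSemicontinuous v)
    (h0 : ∀ z, 0 ≤ v z) : ContDiff ℝ 2 (χ ⋆ v) :=
  h.hasCompactSupport.contDiff_convolution_left _ h.contDiff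
    ((locallyIntegrable_iff).2 fun _ hK =>
      integrableOn_comp_of_upperSemicontinuous hv h0 continuous_id hK)

lemma integrable_prod_mul (h : IsRadialBump δ χ) (hv : UpperSemicontinuous v)
    (h0 : ∀ z, 0 ≤ v z) {A : ℝ → ℂ} (hA : Continuous A) (a b : ℝ) :
    Integrable (Function.uncurry fun θ y => χ y * v (A θ - y))
      ((volume.restrict (Ioc a b)).prod volume) := by
  have hK : IsCompact (Icc a b ×ˢ closedBall (0 : ℂ) δ) :=
    isCompact_Icc.prod (isCompact_closedBall 0 δ)
  have hint : IntegrableOn (fun p : ℝ × ℂ => χ p.2 * v (A p.1 - p.2))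
      (Icc a b ×ˢ closedBall 0 δ) :=
    (integrableOn_comp_of_upperSemicontinuous hv h0 (by fun_prop) hK).continuousOn_mul
      (h.contDiff.continuous.comp continuous_snd).continuousOn hK
  have hsub : Ioc a b ×ˢ closedBall (0 : ℂ) δ ⊆ Icc a b ×ˢ closedBall 0 δ :=
    prod_mono_left Ioc_subset_Icc_self
  rw [← Measure.restrict_univ (μ := (volume : Measure ℂ)), Measure.prod_restrict]
  refine (hint.mono_set hsub).of_forall_sdiff_eq_zero
    (measurableSet_Ioc.prod MeasurableSet.univ) fun p hp => ?_
  simp [h.eq_zero p.2 fun hp' => hp.2 ⟨hp.1.1, hp'⟩]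

lemma setIntegral_mul_circleMap (χ v : ℂ → ℝ) (z y : ℂ) (r : ℝ) :
    ∫ θ in Ioc 0 (2 * π), χ y * v (circleMap z r θ - y) =
      2 * π * (χ y * circleAverage v (z - y) r) := by
  simp only [circleMap, ← sub_add_eq_add_sub, integral_const_mul, circleAverage_def, smul_eq_mul,
    intervalIntegral.integral_of_le two_pi_pos.le]
  rw [mul_left_comm, mul_inv_cancel_left₀ two_pi_pos.ne']

lemma integrable_mul_circleAverage (h : IsRadialBump δ χ) (hv : UpperSemicontinuous v)
    (h0 : ∀ z, 0 ≤ v z) (z : ℂ) (r : ℝ) :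
    Integrable fun y => χ y * circleAverage v (z - y) r := by
  refine (((h.integrable_prod_mul hv h0 (continuous_circleMap z r) 0
    (2 * π)).integral_prod_right).const_mul (2 * π)⁻¹).congr (Eventually.of_forall fun y => ?_)
  simp only [Function.uncurry, setIntegral_mul_circleMap, inv_mul_cancel_left₀ two_pi_pos.ne']

lemma circleAverage_convolution (h : IsRadialBump δ χ) (hv : UpperSemicontinuous v)
    (h0 : ∀ z, 0 ≤ v z) (z : ℂ) (r : ℝ) :
    circleAverage (χ ⋆ v) z r = ∫ y, χ y * circleAverage v (z - y) r := by
  simp only [circleAverage_def (f := χ ⋆ v), convolution_apply, smul_eq_mul,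
    intervalIntegral.integral_of_le two_pi_pos.le]
  rw [integral_integral_swap (h.integrable_prod_mul hv h0 (continuous_circleMap z r) _ _)]
  simp only [setIntegral_mul_circleMap]
  rw [integral_const_mul, inv_mul_cancel_left₀ two_pi_pos.ne']

lemma le_circleAverage_convolution (h : IsRadialBump δ χ) (hv : IsSubharmonic v)
    (h0 : ∀ z, 0 ≤ v z) (z : ℂ) {r : ℝ} (hr : 0 < r) :
    (χ ⋆ v) z ≤ circleAverage (χ ⋆ v) z r := by
  rw [h.circleAverage_convolution hv.1 h0, convolution_apply]
  exact integral_mono (h.integrable_mul hv.1 h0 z) (h.integrable_mul_circleAverage hv.1 h0 z r)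
    fun y => mul_le_mul_of_nonneg_left (hv.le_circleAverage _ hr) (h.nonneg y)

lemma le_convolution (h : IsRadialBump δ χ) (hv : IsSubharmonic v) (h0 : ∀ z, 0 ≤ v z) (z : ℂ) :
    v z ≤ (χ ⋆ v) z := by
  rw [← one_mul (v z), ← h.integral_eq_one, ← integral_mul_const, convolution_apply]
  refine integral_mono_of_circleAverage_le (c := 0) (h.integrable.mul_const _)
    (h.integrable_mul hv.1 h0 z) fun r hr => ?_
  have havg : ∀ f : ℂ → ℝ, circleAverage (fun y => χ y * f y) 0 r = χ r * circleAverage f 0 r :=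
    fun f => by
      rw [circleAverage_congr_sphere (f₂ := fun y => χ r • f y) fun y hy => ?_,
        circleAverage_fun_smul, smul_eq_mul]
      simp only [h.radial y r (by simpa using hy), smul_eq_mul]
  have hreflect : circleAverage (fun y => v (z - y)) 0 r = circleAverage v z r := by
    rw [← circleAverage_neg_radius]
    simp [circleAverage_def, circleMap]
  rw [havg, havg, circleAverage_const, hreflect]
  exact mul_le_mul_of_nonneg_left (hv.le_circleAverage z hr) (h.nonneg r)

lemma convolution_le (h : IsRadialBump δ χ) (hv : UpperSemicontinuous v) (h0 : ∀ z, 0 ≤ v z)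
    {z : ℂ} {C : ℝ} (hC : ∀ y ∈ closedBall z δ, v y ≤ C) : (χ ⋆ v) z ≤ C := by
  calc ∫ y, χ y * v (z - y) ≤ ∫ y, χ y * C := by
        refine integral_mono (h.integrable_mul hv h0 z) (h.integrable.mul_const C) fun y => ?_
        by_cases hy : y ∈ closedBall 0 δ
        · exact mul_le_mul_of_nonneg_left (hC _ (by simpa using hy)) (h.nonneg y)
        · simp [h.eq_zero y hy]
    _ = C := by rw [integral_mul_const, h.integral_eq_one, one_mul]

end IsRadialBump

lemma IsSubharmonic.exists_isC2SubharmonicOn_univ {v : ℂ → ℝ} (hv : IsSubharmonic v)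
    (h0 : ∀ z, 0 ≤ v z) {δ : ℝ} (hδ : 0 < δ) :
    ∃ f, IsC2SubharmonicOn f univ ∧ (∀ z, v z ≤ f z) ∧
      ∀ z C, (∀ y ∈ closedBall z δ, v y ≤ C) → f z ≤ C := by
  obtain ⟨χ, hχ⟩ := exists_isRadialBump hδ
  have hC2 := hχ.contDiff_convolution hv.1 h0
  exact ⟨χ ⋆ v, ⟨fun z _ => hC2.contDiffAt, fun z _ =>
      laplacian_nonneg_of_le_circleAverage hC2.contDiffAt fun r hr =>
        hχ.le_circleAverage_convolution hv h0 z hr⟩,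
    hχ.le_convolution hv h0, fun z C hC => hχ.convolution_le hv.1 h0 hC⟩

/-! ### Cutting off to components of superlevel sets -/

/-- A `C²` monotone convex function that vanishes exactly on `(-∞, 0]` and lies below the
identity on `[0, ∞)`: a smooth substitute for the positive part. -/
noncomputable def smoothPosPart (x : ℝ) : ℝ := ∫ y in 0..x, Real.smoothTransition y

lemma hasDerivAt_smoothPosPart (x : ℝ) :
    HasDerivAt smoothPosPart (Real.smoothTransition x) x :=
  intervalIntegral.integral_hasDerivAt_right
    (Real.smoothTransition.continuous.intervalIntegrable _ _)
    Real.smoothTransition.continuous.stronglyMeasurable.stronglyMeasurableAtFilter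
    Real.smoothTransition.continuous.continuousAt

lemma deriv_smoothPosPart : deriv smoothPosPart = Real.smoothTransition :=
  funext fun x => (hasDerivAt_smoothPosPart x).deriv

lemma contDiff_smoothPosPart : ContDiff ℝ 2 smoothPosPart := by
  refine (contDiff_succ_iff_deriv (n := 1)).2
    ⟨fun x => (hasDerivAt_smoothPosPart x).differentiableAt, by simp, ?_⟩
  rw [deriv_smoothPosPart]
  exact Real.smoothTransition.contDiff

lemma monotone_smoothPosPart : Monotone smoothPosPart :=
  monotone_of_deriv_nonneg (fun x => (hasDerivAt_smoothPosPart x).differentiableAt) fun x => by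
    simpa only [deriv_smoothPosPart] using Real.smoothTransition.nonneg x

lemma smoothPosPart_of_nonpos {x : ℝ} (hx : x ≤ 0) : smoothPosPart x = 0 := by
  refine intervalIntegral.integral_zero_ae (Eventually.of_forall fun y hy => ?_)
  rw [uIoc_of_ge hx] at hy
  exact Real.smoothTransition.zero_of_nonpos hy.2

lemma smoothPosPart_pos {x : ℝ} (hx : 0 < x) : 0 < smoothPosPart x :=
  intervalIntegral.intervalIntegral_pos_of_pos_on
    (Real.smoothTransition.continuous.intervalIntegrable _ _)
    (fun _ hy => Real.smoothTransition.pos_of_pos hy.1) hx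

lemma smoothPosPart_nonneg (x : ℝ) : 0 ≤ smoothPosPart x :=
  (le_total x 0).elim (fun hx => (smoothPosPart_of_nonpos hx).ge) fun hx => by
    simpa only [smoothPosPart_of_nonpos le_rfl] using monotone_smoothPosPart hx

lemma smoothPosPart_le_self {x : ℝ} (hx : 0 ≤ x) : smoothPosPart x ≤ x := by
  have := intervalIntegral.integral_mono_on (μ := volume) hx
    (Real.smoothTransition.continuous.intervalIntegrable _ _)
    (intervalIntegrable_const (c := (1 : ℝ))) fun y _ => Real.smoothTransition.le_one y
  simpa [smoothPosPart] using this

lemma IsC2SubharmonicOn.smoothPosPart_sub {f : ℂ → ℝ} {B : Set ℂ} (hf : IsC2SubharmonicOn f B)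
    (c : ℝ) : IsC2SubharmonicOn (fun z => smoothPosPart (f z - c)) B := by
  refine hf.comp_convex (Ψ := fun x => smoothPosPart (x - c))
    (contDiff_smoothPosPart.comp (contDiff_id.sub contDiff_const)) (fun x => ?_) fun x => ?_
  · rw [deriv_comp_sub_const, deriv_smoothPosPart]
    exact Real.smoothTransition.nonneg _
  · rw [funext (deriv_comp_sub_const smoothPosPart c), deriv_comp_sub_const,
      deriv_smoothPosPart]
    exact Real.smoothTransition.monotone.deriv_nonneg

lemma tsupport_smoothPosPart_sub_subset {X : Type*} [TopologicalSpace X] {f : X → ℝ}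
    (hf : Continuous f) (c : ℝ) : tsupport (fun z => smoothPosPart (f z - c)) ⊆ {z | c ≤ f z} :=
  closure_minimal (fun z hz => by
    by_contra h
    exact hz (smoothPosPart_of_nonpos (sub_nonpos.2 (not_le.1 h).le)))
    (isClosed_le continuous_const hf)

lemma indicator_connectedComponentIn_eventuallyEq {X E : Type*} [TopologicalSpace X]
    [LocallyConnectedSpace X] [Zero E] {F : X → E} {U : Set X} (hU : IsOpen U) (x : X) {z : X}
    (hz : z ∈ tsupport F → z ∈ U) :
    (connectedComponentIn U x).indicator F =ᶠ[𝓝 z] F ∨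
      (connectedComponentIn U x).indicator F =ᶠ[𝓝 z] 0 := by
  by_cases hzF : z ∈ tsupport F
  · have hnhds := hU.connectedComponentIn.mem_nhds (mem_connectedComponentIn (hz hzF))
    by_cases hzC : z ∈ connectedComponentIn U x
    · rw [← connectedComponentIn_eq hzC] at hnhds
      exact .inl (eqOn_indicator.eventuallyEq_of_mem hnhds)
    · refine .inr (eventuallyEq_of_mem hnhds fun y hy => indicator_of_notMem (fun hyC => hzC ?_) _)
      rw [connectedComponentIn_eq hyC, ← connectedComponentIn_eq hy]
      exact mem_connectedComponentIn (hz hzF)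
  · refine .inr ((notMem_tsupport_iff_eventuallyEq.1 hzF).mono fun y hy => ?_)
    exact indicator_apply_eq_zero.2 fun _ => hy

lemma IsC2SubharmonicOn.indicator_connectedComponentIn {F : ℂ → ℝ} {B U : Set ℂ}
    (hF : IsC2SubharmonicOn F B) (hU : IsOpen U) (hsupp : B ∩ tsupport F ⊆ U) (x : ℂ) :
    IsC2SubharmonicOn ((connectedComponentIn U x).indicator F) B := by
  have hlocal z (hz : z ∈ B) := indicator_connectedComponentIn_eventuallyEq hU x
    (F := F) (z := z) fun h => hsupp ⟨hz, h⟩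
  refine ⟨fun z hz => ?_, fun z hz => ?_⟩
  · rcases hlocal z hz with h | h
    · exact (hF.contDiffAt z hz).congr_of_eventuallyEq h
    · exact contDiffAt_const.congr_of_eventuallyEq h
  · rcases hlocal z hz with h | h
    · exact (hF.laplacian_nonneg z hz).trans_eq (laplacian_congr_nhds h).eq_of_nhds.symm
    · rw [(laplacian_congr_nhds h).eq_of_nhds]
      simp [laplacian_eq_iteratedFDeriv_complexPlane]

section TailClosure

variable {X : Type*} [TopologicalSpace X]

lemma isPreconnected_iInter_of_antitone [T2Space X] {A : ℕ → Set X} (hA : Antitone A)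
    (hc : ∀ n, IsCompact (A n)) (hp : ∀ n, IsPreconnected (A n)) : IsPreconnected (⋂ n, A n) := by
  have hI : IsCompact (⋂ n, A n) :=
    (hc 0).of_isClosed_subset (isClosed_iInter fun n => (hc n).isClosed) (iInter_subset _ _)
  rw [isPreconnected_closed_iff]
  intro t t' ht ht' hsub ⟨x, hxA, hxt⟩ ⟨y, hyA, hyt⟩
  by_contra hne
  have hdisj : Disjoint ((⋂ n, A n) ∩ t) ((⋂ n, A n) ∩ t') :=
    disjoint_left.2 fun z hz hz' => hne ⟨z, hz.1, hz.2, hz'.2⟩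
  obtain ⟨U, U', hU, hU', hUt, hUt', hUU'⟩ :=
    SeparatedNhds.of_isCompact_isCompact (hI.inter_right ht) (hI.inter_right ht') hdisj
  obtain ⟨i, hi⟩ := exists_subset_nhds_of_isCompact (U := U ∪ U') hA.directed_ge hc fun z hz =>
    (hU.union hU').mem_nhds ((hsub hz).imp (fun h => hUt ⟨hz, h⟩) fun h => hUt' ⟨hz, h⟩)
  obtain ⟨z, -, hzU, hzU'⟩ := hp i U U' hU hU' hi ⟨x, mem_iInter.1 hxA i, hUt ⟨hxA, hxt⟩⟩
    ⟨y, mem_iInter.1 hyA i, hUt' ⟨hyA, hyt⟩⟩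
  exact hUU'.le_bot ⟨hzU, hzU'⟩

/-- The closures of the tails of a sequence of sets; their intersection is the upper limit of the
sequence in the sense of Kuratowski. -/
def tailClosure (Ω : ℕ → Set X) (m : ℕ) : Set X := closure (⋃ n ≥ m, Ω n)

variable {Ω : ℕ → Set X}

lemma antitone_tailClosure : Antitone (tailClosure Ω) := fun _ _ h =>
  closure_mono (biUnion_mono (fun _ => h.trans) fun _ _ => Subset.rfl)

lemma subset_tailClosure (m : ℕ) : Ω m ⊆ tailClosure Ω m :=
  (subset_biUnion_of_mem (u := Ω) (mem_Ici.2 le_rfl)).trans subset_closure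

lemma isPreconnected_iInter_tailClosure [T2Space X] {K : Set X} {x : X} (hK : IsCompact K)
    (hΩK : ∀ n, Ω n ⊆ K) (hx : ∀ n, x ∈ Ω n) (hΩ : ∀ n, IsPreconnected (Ω n)) :
    IsPreconnected (⋂ m, tailClosure Ω m) := by
  refine isPreconnected_iInter_of_antitone antitone_tailClosure (fun m => ?_) fun m => ?_
  · exact hK.of_isClosed_subset isClosed_closure
      (closure_minimal (iUnion₂_subset fun n _ => hΩK n) hK.isClosed)
  · have hunion : ⋃ n ≥ m, Ω n = ⋃ n : Ici m, Ω n := biUnion_eq_iUnion (Ici m) fun n _ => Ω n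
    rw [tailClosure, hunion]
    exact (isPreconnected_iUnion ⟨x, mem_iInter.2 fun n : Ici m => hx n⟩ fun n => hΩ n).closure

end TailClosure

/-- The component of `z₀` in the part of the superlevel set `{δ < f}` inside a disc. -/
def superlevelComponent (f : ℂ → ℝ) (δ R : ℝ) (z₀ : ℂ) : Set ℂ :=
  connectedComponentIn ({z | δ < f z} ∩ ball 0 R) z₀

lemma superlevelComponent_subset {f : ℂ → ℝ} {δ R : ℝ} {z₀ : ℂ} :
    superlevelComponent f δ R z₀ ⊆ {z | δ < f z} ∩ ball 0 R :=
  connectedComponentIn_subset _ _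

lemma mem_superlevelComponent {f : ℂ → ℝ} {δ R : ℝ} {z₀ : ℂ} (hz₀ : δ < f z₀) (hR : ‖z₀‖ < R) :
    z₀ ∈ superlevelComponent f δ R z₀ :=
  mem_connectedComponentIn ⟨hz₀, by simpa using hR⟩

lemma pos_of_forall_mem_tailClosure {v : ℂ → ℝ} (hv : UpperSemicontinuous v)
    {f : ℕ → ℂ → ℝ} {Ω : ℕ → Set ℂ} {δ : ℝ} (hδ : 0 < δ) (hΩ : ∀ n, Ω n ⊆ {z | δ < f n z})
    (hf : ∀ (n : ℕ) z C, (∀ y ∈ closedBall z (1 / ((n : ℝ) + 1)), v y ≤ C) → f n z ≤ C) {x : ℂ}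
    (hx : ∀ m, x ∈ tailClosure Ω m) : 0 < v x := by
  by_contra! hvx
  obtain ⟨r, hr, hball⟩ := Metric.eventually_nhds_iff.1 (hv x δ (hvx.trans_lt hδ))
  obtain ⟨m, hm⟩ := exists_nat_one_div_lt (half_pos hr)
  obtain ⟨y, hy, hxy⟩ := mem_closure_iff.1 (hx m) (r / 2) (half_pos hr)
  obtain ⟨n, hmn, hn⟩ := mem_iUnion₂.1 hy
  refine (hΩ n hn).not_ge (hf n y _ fun w hw => (hball ?_).le)
  have hmn : (1 : ℝ) / (n + 1) ≤ 1 / (m + 1) := by gcongr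
  rw [dist_comm] at hxy
  linarith [dist_triangle w y x, mem_closedBall.1 hw]

lemma iInter_tailClosure_superlevelComponent_subset {v : ℂ → ℝ} (hv : UpperSemicontinuous v)
    {f : ℕ → ℂ → ℝ} {δ R : ℝ} {z₀ : ℂ} (hδ : 0 < δ) (hz₀ : δ < v z₀) (hR : ‖z₀‖ < R)
    (hle : ∀ n z, v z ≤ f n z)
    (hf : ∀ (n : ℕ) z C, (∀ y ∈ closedBall z (1 / ((n : ℝ) + 1)), v y ≤ C) → f n z ≤ C) :
    ⋂ m, tailClosure (fun n => superlevelComponent (f n) δ R z₀) m ⊆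
      connectedComponentIn {z | 0 < v z} z₀ := by
  have hmem n : z₀ ∈ superlevelComponent (f n) δ R z₀ :=
    mem_superlevelComponent (hz₀.trans_le (hle n z₀)) hR
  have hsub n : superlevelComponent (f n) δ R z₀ ⊆ closedBall 0 R :=
    superlevelComponent_subset.trans (inter_subset_right.trans ball_subset_closedBall)
  refine (isPreconnected_iInter_tailClosure (isCompact_closedBall 0 R) hsub hmem
    fun n => isPreconnected_connectedComponentIn).subset_connectedComponentIn
    (mem_iInter.2 fun m => subset_tailClosure m (hmem m)) fun x hx => ?_
  exact pos_of_forall_mem_tailClosure hv hδ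
    (fun n => superlevelComponent_subset.trans inter_subset_left) hf (mem_iInter.1 hx)

section ThetaStar

variable {A D : Set ℂ} {a : ℝ≥0∞} {r : ℝ}

lemma thetaStar_lt_iff : thetaStar A r < a ↔
    (∃ θ : ℝ, (r * Complex.exp (θ * Complex.I) : ℂ) ∉ A) ∧
      volume.restrict (Ico 0 (2 * π)) {θ : ℝ | (r * Complex.exp (θ * Complex.I) : ℂ) ∈ A} < a := by
  rw [thetaStar, Measure.restrict_apply' measurableSet_Ico, inter_comm]
  split_ifs with h
  · simp [h]
  · exact (and_iff_right (not_forall.1 h)).symm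

lemma thetaStar_mono (h : A ⊆ D) : thetaStar A r ≤ thetaStar D r := by
  refine le_of_forall_gt fun a ha => ?_
  obtain ⟨⟨θ, hθ⟩, hvol⟩ := thetaStar_lt_iff.1 ha
  refine thetaStar_lt_iff.2 ⟨⟨θ, fun hA => hθ (h hA)⟩, lt_of_le_of_lt ?_ hvol⟩
  exact measure_mono fun _ hθ => h hθ

lemma measurableSet_thetaStar_lt (hA : IsClosed A) : MeasurableSet {r | thetaStar A r < a} := by
  simp only [thetaStar_lt_iff]
  have hopen : IsOpen {r : ℝ | ∃ θ : ℝ, (r * Complex.exp (θ * Complex.I) : ℂ) ∉ A} := by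
    rw [ofPred_exists]
    exact isOpen_iUnion fun θ => hA.isOpen_compl.preimage
      (by fun_prop : Continuous fun r : ℝ => (r * Complex.exp (θ * Complex.I) : ℂ))
  have hmeas : Measurable fun r : ℝ =>
      volume.restrict (Ico 0 (2 * π)) {θ : ℝ | (r * Complex.exp (θ * Complex.I) : ℂ) ∈ A} :=
    measurable_measure_prodMk_left (hA.measurableSet.preimage
      (by fun_prop : Measurable fun p : ℝ × ℝ => (p.1 * Complex.exp (p.2 * Complex.I) : ℂ)))
  exact hopen.measurableSet.inter (measurableSet_lt hmeas measurable_const)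

lemma exists_thetaStar_lt_of_iInter_subset {A : ℕ → Set ℂ} (hA : Antitone A)
    (hc : ∀ m, IsClosed (A m)) (hD : ⋂ m, A m ⊆ D) (hr : thetaStar D r < a) :
    ∃ m, thetaStar (A m) r < a := by
  obtain ⟨⟨θ, hθ⟩, hvol⟩ := thetaStar_lt_iff.1 ((thetaStar_mono hD).trans_lt hr)
  obtain ⟨m₁, hm₁⟩ := not_forall.1 fun h => hθ (mem_iInter.2 h)
  set s : ℕ → Set ℝ := fun m => {θ : ℝ | (r * Complex.exp (θ * Complex.I) : ℂ) ∈ A m} with hs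
  have hsm m : MeasurableSet (s m) := (hc m).measurableSet.preimage (by fun_prop)
  have hanti : Antitone s := fun m m' h θ hθ => hA h hθ
  have hlim := tendsto_measure_iInter_atTop (μ := volume.restrict (Ico 0 (2 * π)))
    (fun m => (hsm m).nullMeasurableSet) hanti ⟨0, (measure_lt_top _ _).ne⟩
  have hlt : volume.restrict (Ico 0 (2 * π)) (⋂ m, s m) < a := by
    simpa only [hs, mem_iInter, ofPred_forall] using hvol
  obtain ⟨m₂, hm₂⟩ := (hlim.eventually_lt_const hlt).exists
  refine ⟨max m₁ m₂, thetaStar_lt_iff.2 ⟨⟨θ, fun h => hm₁ (hA (le_max_left m₁ m₂) h)⟩, ?_⟩⟩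
  exact (measure_mono (hanti (le_max_right m₁ m₂))).trans_lt hm₂

end ThetaStar

/-! ### Logarithmic measure of the circles meeting a set in a small angle -/

lemma setLIntegral_ofReal_one_div {S : Set ℝ} (hS : MeasurableSet S) (hpos : S ⊆ Ioi 0) :
    ∫⁻ t in S, ENNReal.ofReal (1 / t) = volume (rexp ⁻¹' S) := by
  have himage : rexp '' (rexp ⁻¹' S) = S :=
    image_preimage_eq_of_subset (hpos.trans Real.range_exp.ge)
  conv_lhs => rw [← himage]
  rw [lintegral_image_eq_lintegral_abs_deriv_mul (Real.measurable_exp hS)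
    (fun t _ => (Real.hasDerivAt_exp t).hasDerivWithinAt) Real.exp_injective.injOn]
  have hone t : ENNReal.ofReal |rexp t| * ENNReal.ofReal (1 / rexp t) = 1 := by
    rw [← ENNReal.ofReal_mul (abs_nonneg _), Real.abs_exp, mul_one_div_cancel (exp_ne_zero t),
      ENNReal.ofReal_one]
  simp only [hone, lintegral_one, Measure.restrict_apply_univ]

lemma exp_preimage_Icc {r₀ r₁ : ℝ} (hr₀ : 0 < r₀) (hr₁ : 0 < r₁) :
    rexp ⁻¹' Icc r₀ r₁ = Icc (Real.log r₀) (Real.log r₁) := by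
  ext t
  simp only [mem_preimage, mem_Icc, Real.log_le_iff_le_exp hr₀, Real.le_log_iff_exp_le hr₁]

lemma IsC2SubharmonicOn.mul_le_sqrt_circleAverage_sq {W : ℂ → ℝ} {R r s : ℝ} {z : ℂ}
    (hW : IsC2SubharmonicOn W (ball 0 R)) (h0 : ∀ z ∈ ball 0 R, 0 ≤ W z) (hs : 0 < s)
    (hsr : ‖z‖ + s ≤ r) (hr : r < R) :
    s / r * W z ≤ √(circleAverage (fun z => W z ^ 2) 0 r) := by
  refine Real.le_sqrt_of_sq_le ?_
  rw [mul_pow]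
  exact (hW.sq h0).mul_le_circleAverage (fun z _ => sq_nonneg _) hs hsr hr

/-- The smoothed positive part of `f - 2δ`, extended by zero outside the component of `z₀` in
`{δ < f} ∩ ball 0 R`. It is supported away from the boundary of `{δ < f}`, so that the extension
stays `C²`. -/
noncomputable def componentCutoff (f : ℂ → ℝ) (δ R : ℝ) (z₀ : ℂ) : ℂ → ℝ :=
  (superlevelComponent f δ R z₀).indicator fun z => smoothPosPart (f z - 2 * δ)

section ComponentCutoff

variable {f : ℂ → ℝ} {δ R : ℝ} {z₀ : ℂ}

lemma isC2SubharmonicOn_componentCutoff (hf : IsC2SubharmonicOn f univ) (hδ : 0 < δ) :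
    IsC2SubharmonicOn (componentCutoff f δ R z₀) (ball 0 R) := by
  have hcont : Continuous f := continuousOn_univ.1 hf.continuousOn
  refine ((hf.smoothPosPart_sub (2 * δ)).mono (subset_univ _)).indicator_connectedComponentIn
    ((isOpen_lt continuous_const hcont).inter isOpen_ball) (fun z hz => ⟨?_, hz.1⟩) z₀
  have hle : 2 * δ ≤ f z := tsupport_smoothPosPart_sub_subset hcont _ hz.2
  exact lt_of_lt_of_le (by linarith) hle

lemma componentCutoff_nonneg (z : ℂ) : 0 ≤ componentCutoff f δ R z₀ z :=
  indicator_nonneg (fun _ _ => smoothPosPart_nonneg _) z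

lemma componentCutoff_le {M : ℝ} (hδ : 0 ≤ δ) (hM : 0 ≤ M) {z : ℂ} (hz : f z ≤ M) :
    componentCutoff f δ R z₀ z ≤ M := by
  refine indicator_apply_le' (fun _ => ?_) fun _ => hM
  rcases le_total (f z - 2 * δ) 0 with h | h
  · rwa [smoothPosPart_of_nonpos h]
  · exact (smoothPosPart_le_self h).trans (by linarith)

lemma smoothPosPart_le_componentCutoff (hδ : 0 < δ) (hz₀ : 3 * δ ≤ f z₀) (hR : ‖z₀‖ < R) :
    smoothPosPart δ ≤ componentCutoff f δ R z₀ z₀ := by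
  rw [componentCutoff, indicator_of_mem (mem_superlevelComponent (by linarith) hR)]
  exact monotone_smoothPosPart (by linarith)

lemma componentCutoff_eq_zero {A : Set ℂ} (hA : superlevelComponent f δ R z₀ ⊆ A) {z : ℂ}
    (hz : z ∉ A) : componentCutoff f δ R z₀ z = 0 :=
  indicator_of_notMem (fun h => hz (hA h)) _

lemma IsC2SubharmonicOn.mul_smoothPosPart_le_sqrt_circleAverage (hf : IsC2SubharmonicOn f univ)
    (hδ : 0 < δ) (hz₀ : 3 * δ ≤ f z₀) {r : ℝ} (hr : ‖z₀‖ < r) (hrR : r < R) :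
    (r - ‖z₀‖) / r * smoothPosPart δ ≤
      √(circleAverage (fun z => componentCutoff f δ R z₀ z ^ 2) 0 r) := by
  refine le_trans ?_ ((isC2SubharmonicOn_componentCutoff hf hδ).mul_le_sqrt_circleAverage_sq
    (z := z₀) (fun z _ => componentCutoff_nonneg z) (sub_pos.2 hr) (by linarith) hrR)
  have hnonneg : 0 ≤ (r - ‖z₀‖) / r :=
    div_nonneg (sub_pos.2 hr).le ((norm_nonneg z₀).trans hr.le)
  gcongr
  exact smoothPosPart_le_componentCutoff hδ hz₀ (hr.trans hrR)

lemma IsC2SubharmonicOn.sqrt_circleAverage_componentCutoff_sq_le (hf : IsC2SubharmonicOn f univ)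
    (hδ : 0 < δ) {r M : ℝ} (hr : 0 ≤ r) (hrR : r < R) (hM : 0 ≤ M)
    (hfM : ∀ z, ‖z‖ ≤ r → f z ≤ M) :
    √(circleAverage (fun z => componentCutoff f δ R z₀ z ^ 2) 0 r) ≤ M := by
  refine (Real.sqrt_le_left hM).2 (circleAverage_mono_on_of_le_circle
    (((isC2SubharmonicOn_componentCutoff hf hδ).sq
      fun z _ => componentCutoff_nonneg z).circleIntegrable ⟨hr, hrR⟩) fun z hz => ?_)
  rw [abs_of_nonneg hr, mem_sphere_zero_iff_norm] at hz
  exact pow_le_pow_left₀ (componentCutoff_nonneg z) (componentCutoff_le hδ.le hM (hfM z hz.le)) 2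

end ComponentCutoff

lemma mul_measureReal_ne_zero_lt_pi {W : ℂ → ℝ} {A : Set ℂ} (hWA : ∀ z ∉ A, W z = 0) {k t : ℝ}
    (hk : 0 < k) (ht : thetaStar A (rexp t) < ENNReal.ofReal (π / k)) :
    (∃ θ : ℝ, W (Complex.exp (t + θ * Complex.I)) = 0) ∧
      k * volume.real ({θ : ℝ | W (Complex.exp (t + θ * Complex.I)) ≠ 0} ∩ Ioc 0 (2 * π)) < π := by
  simp only [Complex.exp_add, ← Complex.ofReal_exp]
  obtain ⟨⟨θ, hθ⟩, hvol⟩ := thetaStar_lt_iff.1 ht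
  refine ⟨⟨θ, hWA _ hθ⟩, ?_⟩
  rw [mul_comm, ← lt_div_iff₀ hk, measureReal_def,
    ← Measure.restrict_apply' (μ := volume) measurableSet_Ioc, ← restrict_Ico_eq_restrict_Ioc]
  refine (ENNReal.lt_ofReal_iff_toReal_lt (measure_ne_top _ _)).1 (lt_of_le_of_lt ?_ hvol)
  exact measure_mono fun θ hθ => not_not.1 fun h => hθ (hWA _ h)

/- The right-hand side depends on `f` only through `M` and `δ`, so that the estimate survives the
passage to the limit in a sequence of such functions. -/
lemma IsC2SubharmonicOn.mul_measureReal_thetaStar_lt_le {f : ℂ → ℝ} {δ R r₀ r₁ M k : ℝ} {z₀ : ℂ}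
    {A : Set ℂ} (hf : IsC2SubharmonicOn f univ) (hδ : 0 < δ) (hz₀ : 3 * δ ≤ f z₀)
    (hr₀ : ‖z₀‖ < r₀) (hr : r₀ ≤ r₁) (hR : rexp 1 * r₁ < R) (hM : 0 ≤ M)
    (hfM : ∀ z, ‖z‖ ≤ rexp 1 * r₁ → f z ≤ M) (hk : 0 < k) (hA : IsClosed A)
    (hfA : superlevelComponent f δ R z₀ ⊆ A) :
    k * volume.real (rexp ⁻¹' {r | thetaStar A r < ENNReal.ofReal (π / k)} ∩
        Icc (Real.log r₀) (Real.log r₁)) ≤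
      Real.log ((1 + k) * M) - Real.log (k * ((r₀ - ‖z₀‖) / r₀ * smoothPosPart δ)) := by
  have hr₀pos : 0 < r₀ := (norm_nonneg z₀).trans_lt hr₀
  have hr₁ : 0 < r₁ := hr₀pos.trans_le hr
  have her₁ : r₁ < rexp 1 * r₁ := lt_mul_of_one_lt_left hr₁ (Real.one_lt_exp_iff.2 one_pos)
  have hRpos : 0 < R := by linarith
  have hexp : rexp (Real.log r₁ + 1) = rexp 1 * r₁ := by
    rw [Real.exp_add, Real.exp_log hr₁, mul_comm]
  set W := componentCutoff f δ R z₀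
  set μ := fun r => √(circleAverage (fun z => W z ^ 2) 0 r)
  have hW : IsC2SubharmonicOn W (ball 0 (rexp (Real.log R))) := by
    rw [Real.exp_log hRpos]
    exact isC2SubharmonicOn_componentCutoff hf hδ
  have hlower {r : ℝ} (hr : ‖z₀‖ < r) (hrR : r < R) : (r - ‖z₀‖) / r * smoothPosPart δ ≤ μ r :=
    hf.mul_smoothPosPart_le_sqrt_circleAverage hδ hz₀ hr hrR
  have hpos {r : ℝ} (hr : ‖z₀‖ < r) : 0 < (r - ‖z₀‖) / r * smoothPosPart δ :=
    mul_pos (div_pos (sub_pos.2 hr) ((norm_nonneg z₀).trans_lt hr)) (smoothPosPart_pos hδ)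
  have hupper : μ (rexp 1 * r₁) ≤ M :=
    hf.sqrt_circleAverage_componentCutoff_sq_le hδ (by positivity) hR hM hfM
  have hcarleman := hW.mul_measureReal_le_log (fun z _ => componentCutoff_nonneg z) hk
    (Real.log_le_log hr₀pos hr) (by rwa [Real.lt_log_iff_exp_lt hRpos, hexp])
    (Real.measurable_exp (measurableSet_thetaStar_lt hA))
    (Real.sqrt_pos.1 (by
      rw [Real.exp_log hr₀pos]
      exact (hpos hr₀).trans_le (hlower hr₀ (by linarith))))
    fun t ht => mul_measureReal_ne_zero_lt_pi (fun z => componentCutoff_eq_zero hfA) hk ht.1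
  rw [hexp, Real.exp_log hr₀pos] at hcarleman
  refine hcarleman.trans (sub_le_sub (Real.log_le_log (mul_pos (by linarith) ?_) ?_)
    (Real.log_le_log (mul_pos hk (hpos hr₀)) ?_))
  · have hz₀r : ‖z₀‖ < rexp 1 * r₁ := by linarith
    exact (hpos hz₀r).trans_le (hlower hz₀r hR)
  · gcongr
  · gcongr
    exact hlower hr₀ (by linarith)

lemma setLIntegral_thetaStar_lt_le_of_iInter_subset {A : ℕ → Set ℂ} {D : Set ℂ} {a C : ℝ≥0∞}
    {g : ℝ → ℝ≥0∞} {s : Set ℝ} (hA : Antitone A) (hc : ∀ m, IsClosed (A m)) (hD : ⋂ m, A m ⊆ D)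
    (h : ∀ m, ∫⁻ t in {r | thetaStar (A m) r < a} ∩ s, g t ≤ C) :
    ∫⁻ t in {r | thetaStar D r < a} ∩ s, g t ≤ C := by
  have hmono : Monotone fun m => {r | thetaStar (A m) r < a} ∩ s := fun m m' hm =>
    inter_subset_inter_left s fun r hr => (thetaStar_mono (hA hm)).trans_lt hr
  calc ∫⁻ t in {r | thetaStar D r < a} ∩ s, g t
      ≤ ∫⁻ t in ⋃ m, {r | thetaStar (A m) r < a} ∩ s, g t :=
        lintegral_mono_set fun r hr => mem_iUnion.2
          ((exists_thetaStar_lt_of_iInter_subset hA hc hD hr.1).imp fun m hm => ⟨hm, hr.2⟩)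
    _ = ⨆ m, ∫⁻ t in {r | thetaStar (A m) r < a} ∩ s, g t :=
        setLIntegral_iUnion_of_directed g hmono.directed_le
    _ ≤ C := iSup_le h

lemma IsC2SubharmonicOn.setLIntegral_thetaStar_lt_le {f : ℂ → ℝ} {δ R r₀ r₁ M k : ℝ} {z₀ : ℂ}
    {A : Set ℂ} (hf : IsC2SubharmonicOn f univ) (hδ : 0 < δ) (hz₀ : 3 * δ ≤ f z₀)
    (hr₀ : ‖z₀‖ < r₀) (hr : r₀ ≤ r₁) (hR : rexp 1 * r₁ < R) (hM : 0 < M)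
    (hfM : ∀ z, ‖z‖ ≤ rexp 1 * r₁ → f z ≤ M) (hk : 0 < k) (hA : IsClosed A)
    (hfA : superlevelComponent f δ R z₀ ⊆ A) :
    ∫⁻ t in {r | thetaStar A r < ENNReal.ofReal (π / k)} ∩ Icc r₀ r₁, ENNReal.ofReal (1 / t) ≤
      ENNReal.ofReal ((Real.log M + (Real.log (1 + k) -
        Real.log (k * ((r₀ - ‖z₀‖) / r₀ * smoothPosPart δ)))) / k) := by
  have hr₀pos : 0 < r₀ := (norm_nonneg z₀).trans_lt hr₀
  rw [setLIntegral_ofReal_one_div ((measurableSet_thetaStar_lt hA).inter measurableSet_Icc)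
    fun t ht => hr₀pos.trans_le ht.2.1, preimage_inter,
    exp_preimage_Icc hr₀pos (hr₀pos.trans_le hr), ← ofReal_measureReal
      (measure_ne_top_of_subset inter_subset_right measure_Icc_lt_top.ne)]
  refine ENNReal.ofReal_le_ofReal ((le_div_iff₀' hk).2 ?_)
  refine (hf.mul_measureReal_thetaStar_lt_le hδ hz₀ hr₀ hr hR hM.le hfM hk hA hfA).trans_eq ?_
  rw [Real.log_mul (by positivity) hM.ne']
  ring

lemma IsSubharmonic.exists_setLIntegral_thetaStar_lt_le {u : ℂ → ℝ} (hu : IsSubharmonic u) {z₀ : ℂ}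
    (hz₀ : 0 < u z₀) {r₀ k : ℝ} (hr₀ : ‖z₀‖ < r₀) (hk : 0 < k) :
    ∃ C, ∀ r₁ ≥ r₀, ∀ M > 0, (∀ z, ‖z‖ ≤ rexp 1 * r₁ + 1 → u z ≤ M) →
      ∫⁻ t in {r | thetaStar (connectedComponentIn {z | 0 < u z} z₀) r <
        ENNReal.ofReal (π / k)} ∩ Icc r₀ r₁, ENNReal.ofReal (1 / t) ≤
      ENNReal.ofReal ((Real.log M + C) / k) := by
  have hr₀pos : 0 < r₀ := (norm_nonneg z₀).trans_lt hr₀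
  have hv := hu.max_zero
  choose f hf hvf hfC using fun n : ℕ => hv.exists_isC2SubharmonicOn_univ
    (fun z => le_max_right _ _) (δ := 1 / ((n : ℝ) + 1)) (by positivity)
  have hz₀f n : u z₀ ≤ f n z₀ := (le_max_left _ _).trans (hvf n z₀)
  set δ := u z₀ / 3 with hδ_def
  have hδ : 0 < δ := by positivity
  refine ⟨Real.log (1 + k) - Real.log (k * ((r₀ - ‖z₀‖) / r₀ * smoothPosPart δ)),
    fun r₁ hr M hM huM => ?_⟩
  set R := rexp 1 * r₁ + 1
  have hz₀R : ‖z₀‖ < R := by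
    nlinarith [Real.add_one_le_exp 1]
  have hfM n z (hz : ‖z‖ ≤ rexp 1 * r₁) : f n z ≤ M := by
    refine hfC n z M fun y hy => max_le (huM y ?_) hM.le
    have hn : (1 : ℝ) / (n + 1) ≤ 1 := div_le_one_of_le₀ (by simp) (by positivity)
    linarith [norm_le_norm_add_norm_sub' y z, mem_closedBall_iff_norm.1 hy]
  have hD := iInter_tailClosure_superlevelComponent_subset hv.1 hδ
    (lt_of_lt_of_le (by linarith) (le_max_left (u z₀) 0)) hz₀R hvf hfC
  simp only [lt_max_iff, lt_irrefl, or_false] at hD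
  exact setLIntegral_thetaStar_lt_le_of_iInter_subset antitone_tailClosure
    (fun m => isClosed_closure) hD fun m =>
      (hf m).setLIntegral_thetaStar_lt_le hδ (by linarith [hz₀f m]) hr₀ hr (lt_add_one _) hM
        (hfM m) hk isClosed_closure
        (subset_tailClosure (Ω := fun n => superlevelComponent (f n) δ R z₀) m)

lemma exists_le_rpow_of_subharmonicOrder_lt {u : ℂ → ℝ} (hu : UpperSemicontinuous u) {a : ℝ}
    (ha : 0 < a) (h : subharmonicOrder u < ENNReal.ofReal a) :
    ∃ C > 0, ∀ z, u z ≤ C * (1 + ‖z‖) ^ a := by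
  obtain ⟨N, hN⟩ := eventually_atTop.1 ((eventually_lt_of_limsup_lt h).and (eventually_gt_atTop 1))
  obtain ⟨K, hK⟩ := (hu.upperSemicontinuousOn _).bddAbove_of_isCompact
    (isCompact_closedBall (0 : ℂ) N)
  refine ⟨max K 1, by positivity, fun z => ?_⟩
  have hpow : 1 ≤ (1 + ‖z‖) ^ a := Real.one_le_rpow (by linarith [norm_nonneg z]) ha.le
  rcases le_total ‖z‖ N with hz | hz
  · have huK : u z ≤ K := hK ⟨z, by simpa using hz, rfl⟩
    exact (huK.trans (le_max_left _ _)).trans (le_mul_of_one_le_right (by positivity) hpow)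
  · obtain ⟨hlt, hz1⟩ := hN _ hz
    rw [ENNReal.ofReal_lt_ofReal_iff ha, div_lt_iff₀ (Real.log_pos hz1)] at hlt
    have hle : u z ≤ sSup (u '' sphere 0 ‖z‖) :=
      le_csSup ((hu.upperSemicontinuousOn _).bddAbove_of_isCompact (isCompact_sphere _ _))
        ⟨z, by simp, rfl⟩
    refine le_trans ?_ (le_mul_of_one_le_left (by positivity) (le_max_right K 1))
    rcases le_or_gt (sSup (u '' sphere 0 ‖z‖)) 0 with hmax | hmax
    · linarith
    · rw [← Real.log_rpow (by linarith), Real.log_lt_log_iff hmax (by positivity)] at hlt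
      refine (hle.trans hlt.le).trans ?_
      gcongr
      linarith

lemma setLIntegral_one_div_inter_Icc_le (S : Set ℝ) {a b c : ℝ} (ha : 0 < a) (hab : a ≤ b) :
    ∫⁻ t in S ∩ Icc a c, ENNReal.ofReal (1 / t) ≤
      ENNReal.ofReal (Real.log b - Real.log a) +
        ∫⁻ t in S ∩ Icc b c, ENNReal.ofReal (1 / t) := by
  have hsub : S ∩ Icc a c ⊆ Icc a b ∪ S ∩ Icc b c := fun t ht =>
    (le_total t b).imp (fun h => ⟨ht.2.1, h⟩) fun h => ⟨ht.1, h, ht.2.2⟩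
  refine ((lintegral_mono_set hsub).trans (lintegral_union_le _ _ _)).trans_eq ?_
  rw [setLIntegral_ofReal_one_div measurableSet_Icc fun t ht => ha.trans_le ht.1,
    exp_preimage_Icc ha (ha.trans_le hab), Real.volume_Icc]

lemma IsSubharmonic.exists_setLIntegral_thetaStar_lt_le_log {u : ℂ → ℝ} (hu : IsSubharmonic u)
    {z₀ : ℂ} (hz₀ : 0 < u z₀) {ε a : ℝ} (hε : 0 < ε) (ha : 0 < a)
    (h : subharmonicOrder u < ENNReal.ofReal a) :
    ∃ L, ∀ᶠ R in atTop, ∫⁻ t in {r | thetaStar (connectedComponentIn {z | 0 < u z} z₀) r <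
        ENNReal.ofReal (ε * π)} ∩ Icc 1 R, ENNReal.ofReal (1 / t) ≤
      ENNReal.ofReal (ε * a * Real.log R + L) := by
  obtain ⟨K, hK0, hK⟩ := exists_le_rpow_of_subharmonicOrder_lt hu.1 ha h
  obtain ⟨C, hC⟩ := hu.exists_setLIntegral_thetaStar_lt_le hz₀ (lt_add_one ‖z₀‖) (one_div_pos.2 hε)
  rw [show π / (1 / ε) = ε * π by field_simp] at hC
  set r₀ := ‖z₀‖ + 1
  have hr₀ : 1 ≤ r₀ := le_add_of_nonneg_left (norm_nonneg z₀)
  set B := ε * (Real.log K + a * Real.log (rexp 1 + 2) + C)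
  refine ⟨Real.log r₀ + |B|, (eventually_ge_atTop r₀).mono fun R hR => ?_⟩
  have hR1 : 1 ≤ R := hr₀.trans hR
  have hM : 0 < K * ((rexp 1 + 2) * R) ^ a := by positivity
  have hlogM : (Real.log (K * ((rexp 1 + 2) * R) ^ a) + C) / (1 / ε) =
      ε * a * Real.log R + B := by
    rw [Real.log_mul hK0.ne' (by positivity), Real.log_rpow (by positivity),
      Real.log_mul (by positivity) (by positivity), div_div_eq_mul_div, div_one]
    ring
  have hgrowth z (hz : ‖z‖ ≤ rexp 1 * R + 1) : u z ≤ K * ((rexp 1 + 2) * R) ^ a := by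
    refine (hK z).trans ?_
    gcongr
    linarith
  have hlog : 0 ≤ ε * a * Real.log R := mul_nonneg (by positivity) (Real.log_nonneg hR1)
  refine (setLIntegral_one_div_inter_Icc_le _ one_pos hr₀).trans ?_
  rw [Real.log_one, sub_zero, add_left_comm, ENNReal.ofReal_add (Real.log_nonneg hr₀)
    (by positivity)]
  gcongr
  refine (hC R hR _ hM hgrowth).trans (ENNReal.ofReal_le_ofReal ?_)
  linarith [le_abs_self B]

lemma limsup_ofReal_one_div_log_mul_le {Φ : ℝ → ℝ≥0∞} {c L : ℝ}
    (h : ∀ᶠ R in atTop, Φ R ≤ ENNReal.ofReal (c * Real.log R + L)) :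
    limsup (fun R => ENNReal.ofReal (1 / Real.log R) * Φ R) atTop ≤ ENNReal.ofReal c := by
  have hlim : Tendsto (fun R => ENNReal.ofReal (c + L / Real.log R)) atTop
      (𝓝 (ENNReal.ofReal c)) := by
    refine ENNReal.tendsto_ofReal ?_
    simpa using (Real.tendsto_log_atTop.const_div_atTop L).const_add c
  rw [← hlim.limsup_eq]
  refine limsup_le_limsup ?_
  filter_upwards [h, eventually_gt_atTop 1] with R hR hR1
  have hlog := Real.log_pos hR1
  calc ENNReal.ofReal (1 / Real.log R) * Φ R
      ≤ ENNReal.ofReal (1 / Real.log R) * ENNReal.ofReal (c * Real.log R + L) := by gcongr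
    _ = ENNReal.ofReal (c + L / Real.log R) := by
      rw [← ENNReal.ofReal_mul (by positivity)]
      congr 1
      field_simp

end

/-- Lemma 2, second part (Rossi): if `u` is subharmonic on `ℂ` of finite order, `D` is a
connected component of `{z : u(z) > 0}` and `F = {r ≥ 1 : θ*(r) ≤ επ}`, then
`limsup_{R→∞} (1/log R) ∫_{F∩[1,R]} dt/t ≤ ε ρ(u)`. -/
theorem stmt_7 (u : ℂ → ℝ) (hu : IsSubharmonic u)
    (hfin : subharmonicOrder u < ⊤)
    (D : Set ℂ) (z₀ : ℂ) (hz₀ : 0 < u z₀)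
    (hD : D = connectedComponentIn {z : ℂ | 0 < u z} z₀)
    (ε : ℝ) (hε : 0 < ε)
    (F : Set ℝ) (hF : F = {r : ℝ | 1 ≤ r ∧ thetaStar D r ≤ ENNReal.ofReal (ε * π)}) :
    Filter.limsup (fun R : ℝ =>
        ENNReal.ofReal (1 / Real.log R) *
          ∫⁻ t in F ∩ Set.Icc (1:ℝ) R, ENNReal.ofReal (1 / t)) Filter.atTop ≤
      ENNReal.ofReal ε * subharmonicOrder u := by
  subst hD hF
  set ρ := (subharmonicOrder u).toReal
  have hu_order : subharmonicOrder u = ENNReal.ofReal ρ := (ENNReal.ofReal_toReal hfin.ne).symm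
  have hcont : Continuous fun s => ENNReal.ofReal ((ε + s) * (ρ + s)) :=
    ENNReal.continuous_ofReal.comp (by fun_prop)
  have hlim : Tendsto (fun s => ENNReal.ofReal ((ε + s) * (ρ + s))) (nhdsWithin 0 (Set.Ioi 0))
      (nhds (ENNReal.ofReal ε * subharmonicOrder u)) := by
    rw [hu_order, ← ENNReal.ofReal_mul hε.le]
    simpa only [add_zero] using (hcont.tendsto 0).mono_left nhdsWithin_le_nhds
  refine ge_of_tendsto hlim ?_
  filter_upwards [self_mem_nhdsWithin] with s (hs : 0 < s)
  have horder : subharmonicOrder u < ENNReal.ofReal (ρ + s) := by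
    rw [hu_order, ENNReal.ofReal_lt_ofReal_iff (by positivity)]
    exact lt_add_of_pos_right ρ hs
  have hangle : ENNReal.ofReal (ε * π) < ENNReal.ofReal ((ε + s) * π) := by
    rw [ENNReal.ofReal_lt_ofReal_iff (by positivity)]
    gcongr
    exact lt_add_of_pos_right ε hs
  obtain ⟨L, hL⟩ := hu.exists_setLIntegral_thetaStar_lt_le_log hz₀ (ε := ε + s) (a := ρ + s)
    (by positivity) (by positivity) horder
  refine limsup_ofReal_one_div_log_mul_le (hL.mono fun R hR => le_trans ?_ hR)
  exact lintegral_mono_set (Set.inter_subset_inter_left _ fun r hr => hr.2.trans_lt hangle)
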